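/- Suppose K is closed at infinity, the degrees of f and of every c_j with j ∈ I are all even, and f ∈ ℝ + int(P_d(K)), i.e., f − c lies in the interior of P_d(K) for some c ∈ ℝ (in particular f_min is finite). If the LICQC, SCC and SOSC hold at every global minimizer of the problem (H⁰): minimize f̃(x̃) − f_min·x_0^d subject to c̃_j(x̃) = 0 (j∈E), ‖x̃‖² − 1 = 0, c̃_j(x̃) ≥ 0 (j∈I), then there exists k0 ∈ ℕ such that f_k^den = f_min for all k ≥ k0. -/

import Mathlib

open MvPolynomial MeasureTheory

noncomputable section

/-- The space of real polynomials in `n` variables. -/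
abbrev RPoly (n : ℕ) : Type := MvPolynomial (Fin n) ℝ

/-- The degree `|α|` of a monomial power `α`. -/
def mdeg {n : ℕ} (α : Fin n →₀ ℕ) : ℕ := ∑ i, α i

/-- `p` is a sum of squares of polynomials. -/
def IsSOS {n : ℕ} (p : RPoly n) : Prop :=
  ∃ L : List (RPoly n), p = (L.map (fun q => q ^ 2)).sum

/-- The truncation `QM(g)_k` of the quadratic module generated by `(g j)_{j ∈ S}`. -/
def QModDeg {n : ℕ} {κ : Type} (S : Finset κ) (g : κ → RPoly n) (k : ℕ) :
    Set (RPoly n) :=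
  {p | ∃ σ0 : RPoly n, ∃ σ : κ → RPoly n,
      IsSOS σ0 ∧ σ0.totalDegree ≤ k ∧
      (∀ j ∈ S, IsSOS (σ j) ∧ (σ j).totalDegree + (g j).totalDegree ≤ k) ∧
      p = σ0 + ∑ j ∈ S, g j * σ j}

/-- The truncation `Ideal(h)_k` of the ideal generated by `(h j)_{j ∈ S}`. -/
def IdealDeg {n : ℕ} {ι : Type} (S : Finset ι) (h : ι → RPoly n) (k : ℕ) :
    Set (RPoly n) :=
  {p | ∃ q : ι → RPoly n,
      (∀ j ∈ S, (q j).totalDegree + (h j).totalDegree ≤ k) ∧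
      p = ∑ j ∈ S, h j * q j}

/-- The quadratic module `QM(g)` generated by `(g j)_{j ∈ S}`. -/
def QModFull {n : ℕ} {κ : Type} (S : Finset κ) (g : κ → RPoly n) : Set (RPoly n) :=
  {p | ∃ σ0 : RPoly n, ∃ σ : κ → RPoly n,
      IsSOS σ0 ∧ (∀ j ∈ S, IsSOS (σ j)) ∧ p = σ0 + ∑ j ∈ S, g j * σ j}

/-- The ideal `Ideal(h)` generated by `(h j)_{j ∈ S}`. -/
def IdealFull {n : ℕ} {ι : Type} (S : Finset ι) (h : ι → RPoly n) : Set (RPoly n) :=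
  (Ideal.span (h '' (S : Set ι)) : Ideal (RPoly n))

/-- `Ideal(c_eq) + QM(c_in)` is archimedean. -/
def ArchimedeanQM {n : ℕ} (E I : Finset ℕ) (c : ℕ → RPoly n) : Prop :=
  ∃ R : ℝ, 0 < R ∧ ∃ p1 ∈ IdealFull E c, ∃ p2 ∈ QModFull I c,
    (C R : RPoly n) - ∑ i, (X i : RPoly n) ^ 2 = p1 + p2

/-- The basic closed semialgebraic set `K`. -/
def Kset {n : ℕ} (E I : Finset ℕ) (c : ℕ → RPoly n) : Set (Fin n → ℝ) :=
  {x | (∀ j ∈ E, eval x (c j) = 0) ∧ (∀ j ∈ I, 0 ≤ eval x (c j))}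

/-- The bilinear pairing `⟨p, y⟩ = ∑_α p_α y_α`. -/
def pairing {n : ℕ} (p : RPoly n) (y : (Fin n →₀ ℕ) → ℝ) : ℝ :=
  ∑ α ∈ p.support, p.coeff α * y α

/-- Membership in the moment cone `ℛ_d(K)`: the entries `y_α`, `|α| ≤ d`, are the
moments of a finite Borel measure supported in the closed set `K`. -/
def InMomentCone {n : ℕ} (d : ℕ) (K : Set (Fin n → ℝ)) (y : (Fin n →₀ ℕ) → ℝ) : Prop :=
  ∃ μ : Measure (Fin n → ℝ), IsFiniteMeasure μ ∧ μ Kᶜ = 0 ∧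
    ∀ α : Fin n →₀ ℕ, mdeg α ≤ d →
      Integrable (fun x => ∏ i, x i ^ α i) μ ∧
      y α = ∫ x, (∏ i, x i ^ α i) ∂μ

/-- The cone `P_d(K)` of polynomials of degree at most `d` that are nonnegative on `K`. -/
def PdCone {n : ℕ} (d : ℕ) (K : Set (Fin n → ℝ)) : Set (RPoly n) :=
  {p | p.totalDegree ≤ d ∧ ∀ x ∈ K, 0 ≤ eval x p}

/-- The interior of `P_d(K)` in the coefficient topology of `ℝ[x]_d`. -/
def PdInterior {n : ℕ} (d : ℕ) (K : Set (Fin n → ℝ)) : Set (RPoly n) :=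
  {p | p.totalDegree ≤ d ∧ ∃ ε : ℝ, 0 < ε ∧ ∀ q : RPoly n, q.totalDegree ≤ d →
      (∀ α : Fin n →₀ ℕ, |q.coeff α - p.coeff α| ≤ ε) → ∀ x ∈ K, 0 ≤ eval x q}

instance degLEFintype (n t : ℕ) : Fintype {α : Fin n →₀ ℕ // mdeg α ≤ t} := by
  apply Fintype.ofInjective
    (fun a : {α : Fin n →₀ ℕ // mdeg α ≤ t} =>
      (fun i => (⟨a.1 i, by
        have h1 : a.1 i ≤ mdeg a.1 :=
          Finset.single_le_sum (fun j _ => Nat.zero_le _) (Finset.mem_univ i)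
        exact Nat.lt_succ_of_le (le_trans h1 a.2)⟩ : Fin (t + 1))) :
        {α : Fin n →₀ ℕ // mdeg α ≤ t} → (Fin n → Fin (t + 1)))
  intro a b hab
  apply Subtype.ext
  ext i
  exact congrArg Fin.val (congrFun hab i)

/-- The moment matrix `M_t[w]`, indexed by monomial powers of degree at most `t`. -/
def momentMatrix {n : ℕ} (t : ℕ) (w : (Fin n →₀ ℕ) → ℝ) :
    Matrix {α : Fin n →₀ ℕ // mdeg α ≤ t} {α : Fin n →₀ ℕ // mdeg α ≤ t} ℝ :=
  fun α β => w (α.1 + β.1)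

/-- `w` admits a flat truncation: for some `d0 ≤ t ≤ k`,
`rank M_{t-dK}[w] = rank M_t[w]`. -/
def HasFlatTruncation {n : ℕ} (d0 dK k : ℕ) (w : (Fin n →₀ ℕ) → ℝ) : Prop :=
  ∃ t : ℕ, d0 ≤ t ∧ t ≤ k ∧
    (momentMatrix (t - dK) w).rank = (momentMatrix t w).rank

/-- The gradient of a polynomial at a point. -/
def gradP {n : ℕ} (p : RPoly n) (u : Fin n → ℝ) : Fin n → ℝ :=
  fun i => eval u (pderiv i p)

/-- The Hessian of a polynomial at a point. -/
def hessP {n : ℕ} (p : RPoly n) (u : Fin n → ℝ) : Fin n → Fin n → ℝ :=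
  fun i j => eval u (pderiv i (pderiv j p))

/-- The classical optimality conditions (LICQC, KKT with SCC and SOSC) at the point `u`
for the problem: minimize `F` subject to `ge j = 0` (`j ∈ Es`), `gi j ≥ 0` (`j ∈ Is`). -/
def OptCondsAt {n : ℕ} {ι κ : Type}
    (Es : Finset ι) (ge : ι → RPoly n) (Is : Finset κ) (gi : κ → RPoly n)
    (F : RPoly n) (u : Fin n → ℝ) : Prop :=
  -- LICQC: gradients of active constraints are linearly independent
  LinearIndependent ℝ
    (Sum.elim
      (fun j : {j : ι // j ∈ Es ∧ eval u (ge j) = 0} => gradP (ge j.1) u)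
      (fun j : {j : κ // j ∈ Is ∧ eval u (gi j) = 0} => gradP (gi j.1) u)) ∧
  ∃ (lamE : ι → ℝ) (lamI : κ → ℝ),
    -- KKT stationarity
    (gradP F u =
      (∑ j ∈ Es, lamE j • gradP (ge j) u) + ∑ j ∈ Is, lamI j • gradP (gi j) u) ∧
    (∀ j ∈ Is, 0 ≤ lamI j ∧ lamI j * eval u (gi j) = 0) ∧
    -- SCC
    (∀ j ∈ Is, 0 < lamI j + eval u (gi j)) ∧
    -- SOSC
    (∀ v : Fin n → ℝ, v ≠ 0 →
      (∀ j ∈ Es, (∑ i, v i * gradP (ge j) u i) = 0) →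
      (∀ j ∈ Is, eval u (gi j) = 0 → (∑ i, v i * gradP (gi j) u i) = 0) →
      0 < ∑ i, ∑ i', v i *
        ((hessP F u i i' - ∑ j ∈ Es, lamE j * hessP (ge j) u i i')
          - ∑ j ∈ Is, lamI j * hessP (gi j) u i i') * v i')

/-- The degree-`ℓ` homogenization `x_0^ℓ p(x/x_0)` of `p`; the new variable `x_0`
is the variable of index `0` in `Fin (n+1)`. -/
def homogAux {n : ℕ} (ℓ : ℕ) (p : RPoly n) : RPoly (n + 1) :=
  ∑ α ∈ p.support,
    monomial
      (Finsupp.single (0 : Fin (n + 1)) (ℓ - mdeg α) + Finsupp.mapDomain Fin.succ α)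
      (p.coeff α)

/-- The homogenization `p̃` of `p`. -/
def homogenize {n : ℕ} (p : RPoly n) : RPoly (n + 1) := homogAux p.totalDegree p

/-- The polynomial `‖x̃‖² - 1`. -/
def sphereP (n : ℕ) : RPoly (n + 1) := (∑ i, (X i : RPoly (n + 1)) ^ 2) - 1

/-- The homogenization `K̃` of the set `K`. -/
def Khom {n : ℕ} (E I : Finset ℕ) (c : ℕ → RPoly n) : Set (Fin (n + 1) → ℝ) :=
  {x | (∀ j ∈ E, eval x (homogenize (c j)) = 0) ∧
       (∀ j ∈ I, 0 ≤ eval x (homogenize (c j))) ∧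
       (∑ i, (x i) ^ 2) = 1 ∧ 0 ≤ x 0}

/-- `K` is closed at infinity. -/
def ClosedAtInfinity {n : ℕ} (E I : Finset ℕ) (c : ℕ → RPoly n) : Prop :=
  Khom E I c = closure (Khom E I c ∩ {x | 0 < x 0})

/-- The tuple `c̃_eq`: the homogenizations `c̃_j` together with `‖x̃‖² - 1`
(the latter indexed by `none`). -/
def gEqH {n : ℕ} (c : ℕ → RPoly n) : Option ℕ → RPoly (n + 1) :=
  fun o => o.elim (sphereP n) (fun j => homogenize (c j))

/-- The tuple `c̃_in`: the homogenizations `c̃_j` together with `x_0`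
(the latter indexed by `none`). -/
def gInH {n : ℕ} (c : ℕ → RPoly n) : Option ℕ → RPoly (n + 1) :=
  fun o => o.elim (X 0) (fun j => homogenize (c j))

/-- The index set of a tuple extended by one extra entry (indexed by `none`). -/
def OS (S : Finset ℕ) : Finset (Option ℕ) := insert none (S.image some)

/-- Feasibility of `θ` for the linear conic problem (P). -/
def PFeas {n m : ℕ} (m1 d : ℕ) (f : RPoly n) (a : Fin m → RPoly n)
    (K : Set (Fin n → ℝ)) (θ : Fin m → ℝ) : Prop :=
  (∀ i : Fin m, m1 ≤ (i : ℕ) → 0 ≤ θ i) ∧ (f - ∑ i, C (θ i) * a i) ∈ PdCone d K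

/-- The optimal value `ϑ*` of the linear conic problem (P). -/
def PVal {n m : ℕ} (m1 d : ℕ) (f : RPoly n) (a : Fin m → RPoly n) (b : Fin m → ℝ)
    (K : Set (Fin n → ℝ)) : ℝ :=
  sSup {v : ℝ | ∃ θ : Fin m → ℝ, PFeas m1 d f a K θ ∧ v = ∑ i, b i * θ i}

/-- Feasibility of `y` for the generalized moment problem (M). -/
def MFeas {n m : ℕ} (m1 d : ℕ) (a : Fin m → RPoly n) (b : Fin m → ℝ)
    (K : Set (Fin n → ℝ)) (y : (Fin n →₀ ℕ) → ℝ) : Prop :=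
  InMomentCone d K y ∧
  (∀ i : Fin m, (i : ℕ) < m1 → pairing (a i) y = b i) ∧
  (∀ i : Fin m, m1 ≤ (i : ℕ) → b i ≤ pairing (a i) y)

/-- The optimal value `φ*` of the generalized moment problem (M). -/
def MVal {n m : ℕ} (m1 d : ℕ) (f : RPoly n) (a : Fin m → RPoly n) (b : Fin m → ℝ)
    (K : Set (Fin n → ℝ)) : ℝ :=
  sInf {v : ℝ | ∃ y : (Fin n →₀ ℕ) → ℝ, MFeas m1 d a b K y ∧ v = pairing f y}

/-- The optimal value `ϑ_k` of the `k`th SOS relaxation of (P). -/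
def SOSRelaxVal {n m : ℕ} {ι κ : Type} (m1 : ℕ) (f : RPoly n) (a : Fin m → RPoly n)
    (b : Fin m → ℝ) (Es : Finset ι) (ge : ι → RPoly n) (Is : Finset κ) (gi : κ → RPoly n)
    (k : ℕ) : ℝ :=
  sSup {v : ℝ | ∃ θ : Fin m → ℝ, (∀ i : Fin m, m1 ≤ (i : ℕ) → 0 ≤ θ i) ∧
      (∃ p1 ∈ IdealDeg Es ge (2 * k), ∃ p2 ∈ QModDeg Is gi (2 * k),
        f - ∑ i, C (θ i) * a i = p1 + p2) ∧
      v = ∑ i, b i * θ i}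

/-- The semidefinite constraints of the `k`th moment relaxation:
the localizing vectors of the equality constraints vanish, and the localizing
matrices of the inequality constraints and the moment matrix are positive
semidefinite (stated equivalently via the associated quadratic forms). -/
def MomRelaxPSD {n : ℕ} {ι κ : Type} (Es : Finset ι) (ge : ι → RPoly n)
    (Is : Finset κ) (gi : κ → RPoly n) (k : ℕ) (w : (Fin n →₀ ℕ) → ℝ) : Prop :=
  (∀ j ∈ Es, ∀ p : RPoly n, p.totalDegree + (ge j).totalDegree ≤ 2 * k →
      pairing (ge j * p) w = 0) ∧
  (∀ j ∈ Is, ∀ p : RPoly n, p.totalDegree + ((gi j).totalDegree + 1) / 2 ≤ k →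
      0 ≤ pairing (gi j * p ^ 2) w) ∧
  (∀ p : RPoly n, p.totalDegree ≤ k → 0 ≤ pairing (p ^ 2) w)

/-- Feasibility of `w` for the `k`th moment relaxation of (M). -/
def GMomFeas {n m : ℕ} {ι κ : Type} (m1 : ℕ) (a : Fin m → RPoly n) (b : Fin m → ℝ)
    (Es : Finset ι) (ge : ι → RPoly n) (Is : Finset κ) (gi : κ → RPoly n) (k : ℕ)
    (w : (Fin n →₀ ℕ) → ℝ) : Prop :=
  (∀ i : Fin m, (i : ℕ) < m1 → pairing (a i) w = b i) ∧
  (∀ i : Fin m, m1 ≤ (i : ℕ) → b i ≤ pairing (a i) w) ∧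
  MomRelaxPSD Es ge Is gi k w

/-- The optimal value `φ_k` of the `k`th moment relaxation of (M). -/
def GMomVal {n m : ℕ} {ι κ : Type} (m1 : ℕ) (f : RPoly n) (a : Fin m → RPoly n)
    (b : Fin m → ℝ) (Es : Finset ι) (ge : ι → RPoly n) (Is : Finset κ) (gi : κ → RPoly n)
    (k : ℕ) : ℝ :=
  sInf {v : ℝ | ∃ w : (Fin n →₀ ℕ) → ℝ,
      GMomFeas m1 a b Es ge Is gi k w ∧ v = pairing f w}

/-- The optimal value `f_k^den` of the `k`th order relaxation with denominators. -/
def DenRelaxVal {n : ℕ} (E I : Finset ℕ) (c : ℕ → RPoly n) (f : RPoly n) (d k : ℕ) : ℝ :=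
  sSup {γ : ℝ | ∃ p1 ∈ IdealDeg E c (2 * k + d), ∃ p2 ∈ QModDeg I c (2 * k + d),
      (1 + ∑ i, (X i : RPoly n) ^ 2) ^ k * (f - C γ) = p1 + p2}


/-- The degree bound `d_K = max_j ⌈deg(c_j)/2⌉`. -/
def dKOrig {n : ℕ} (E I : Finset ℕ) (c : ℕ → RPoly n) : ℕ :=
  (E ∪ I).sup fun j => ((c j).totalDegree + 1) / 2

/-- The degree bound `d_0` for the GMP relaxations. -/
def d0GMP {n m : ℕ} (f : RPoly n) (a : Fin m → RPoly n) (E I : Finset ℕ)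
    (c : ℕ → RPoly n) : ℕ :=
  max ((f.totalDegree + 1) / 2)
    (max (dKOrig E I c) (Finset.univ.sup fun i : Fin m => ((a i).totalDegree + 1) / 2))

/-- The degree bound `d̃_K` for the homogenized constraining tuples. -/
def dKHom {n : ℕ} (E I : Finset ℕ) (c : ℕ → RPoly n) : ℕ :=
  max ((OS E).sup fun o => ((gEqH c o).totalDegree + 1) / 2)
      ((OS I).sup fun o => ((gInH c o).totalDegree + 1) / 2)

end

/-!
Let `F = f̃ - f_min x₀ ^ d`. Closedness at infinity and evenness of the degrees make `F` nonnegative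
on the feasible part of the sphere, where strict complementarity and the second-order condition
isolate its zeros; compactness leaves finitely many of them.

If `F` were not in `M = Ideal(c̃_eq) + QM(c̃_in)`, separation inside the ideal of those zeros would
give an extreme functional that is nonnegative on `M` and nonpositive at `F` (the pure states of
Burgdorf, Scheiderer and Schweighofer). Such a functional is either a multiple of the evaluation at
a feasible point where `F > 0`, or a second-order functional at a zero of `F`. Expanding `F` to
second order with its Lagrange multipliers excludes the latter: complementarity forces its moment
matrix onto tangent directions, where the Hessian of the Lagrangian is positive definite.

Finally a certificate `F ∈ M` is evaluated at `(1, x) / √θ`, multiplied by a power of `√θ`, and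
averaged over the two signs of `√θ`.
-/

section States

variable {V : Type*} [AddCommGroup V] [Module ℝ V] {K : PointedCone ℝ V} {u : V}

/-- `u` is an order unit of the cone `K`: it lies in `K`, and every vector enters `K` after adding
a large multiple of `u`. -/
structure IsOrderUnit (K : PointedCone ℝ V) (u : V) : Prop where
  mem : u ∈ K
  exists_smul_add_mem : ∀ v, ∃ N : ℝ, N • u + v ∈ K

/-- The states of the cone `K` with respect to `u`: linear functionals that are nonnegative on `K`
and take the value `1` at `u`. They are encoded as plain functions so that the state space inherits
the product topology of `V → ℝ`. -/
def stateSpace (K : PointedCone ℝ V) (u : V) : Set (V → ℝ) :=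
  Set.range (fun φ : V →ₗ[ℝ] ℝ => (φ : V → ℝ)) ∩ {φ | (∀ v ∈ K, 0 ≤ φ v) ∧ φ u = 1}

theorem coe_mem_stateSpace {φ : V →ₗ[ℝ] ℝ} (hK : ∀ v ∈ K, 0 ≤ φ v) (hu : φ u = 1) :
    ⇑φ ∈ stateSpace K u :=
  ⟨⟨φ, rfl⟩, hK, hu⟩

theorem IsOrderUnit.exists_state (hu : IsOrderUnit K u) (hneg : -u ∉ K) :
    ∃ φ : V →ₗ[ℝ] ℝ, (∀ v ∈ K, 0 ≤ φ v) ∧ φ u = 1 := by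
  have hu0 : u ≠ 0 := by
    rintro rfl
    exact hneg (by simp)
  let f : V →ₗ.[ℝ] ℝ := LinearPMap.mkSpanSingleton (σ := RingHom.id ℝ) u 1 hu0
  have f_smul (r : ℝ) (hr : r • u ∈ f.domain) : f ⟨r • u, hr⟩ = r :=
    (LinearPMap.mkSpanSingleton'_apply (σ := RingHom.id ℝ) _ _ _ _ _).trans (mul_one r)
  obtain ⟨φ, hφf, hφK⟩ := riesz_extension K f
    (by
      rintro ⟨x, hx⟩ hxK
      obtain ⟨r, rfl⟩ := Submodule.mem_span_singleton.1 hx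
      rw [f_smul]
      by_contra! hr
      refine hneg ?_
      have := K.smul_mem (inv_nonneg.2 (neg_nonneg.2 hr.le)) hxK
      rwa [smul_smul, inv_neg, neg_mul, inv_mul_cancel₀ hr.ne, neg_one_smul] at this)
    fun y =>
      let ⟨N, hN⟩ := hu.exists_smul_add_mem y
      ⟨⟨N • u, Submodule.smul_mem _ _ (Submodule.mem_span_singleton_self u)⟩, hN⟩
  refine ⟨φ, hφK, ?_⟩
  have h1 : (1 : ℝ) • u ∈ f.domain := Submodule.smul_mem _ _ (Submodule.mem_span_singleton_self u)
  simpa only [one_smul] using (hφf ⟨(1 : ℝ) • u, h1⟩).trans (f_smul 1 h1)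

theorem IsOrderUnit.exists_state_nonpos (hu : IsOrderUnit K u) {v : V} (hv : v ∉ K) :
    ∃ φ : V →ₗ[ℝ] ℝ, ⇑φ ∈ stateSpace K u ∧ φ v ≤ 0 := by
  let K' : PointedCone ℝ V := K ⊔ PointedCone.hull ℝ {-v}
  have hK' : K ≤ K' := le_sup_left
  have hvK' : -v ∈ K' := le_sup_right (a := K) (PointedCone.subset_hull rfl)
  have hu' : IsOrderUnit K' u :=
    ⟨hK' hu.mem, fun w => (hu.exists_smul_add_mem w).imp fun _ h => hK' h⟩
  have hneg : -u ∉ K' := by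
    intro h
    obtain ⟨p, hp, q, hq, hpq⟩ := Submodule.mem_sup.1 h
    obtain ⟨⟨t, ht⟩, rfl⟩ := Submodule.mem_span_singleton.1 hq
    replace hpq : p + t • -v = -u := hpq
    have htv : t • v ∈ K := by
      convert K.add_mem hp hu.mem using 1
      rw [← sub_eq_zero] at hpq ⊢
      rw [← neg_eq_zero, ← hpq]
      module
    rcases ht.eq_or_lt with rfl | ht
    · obtain ⟨N, hN⟩ := hu.exists_smul_add_mem v
      have hnu : -u ∈ K := by simpa [← hpq] using hp
      refine hv ?_
      have h1 := K.smul_mem (le_max_right N 0) hnu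
      have h2 := K.smul_mem (sub_nonneg.2 (le_max_left N 0)) hu.mem
      convert K.add_mem (K.add_mem hN h1) h2 using 1
      module
    · refine hv ?_
      simpa [smul_smul, ht.ne'] using K.smul_mem (inv_nonneg.2 ht.le) htv
  obtain ⟨φ, hφK, hφu⟩ := hu'.exists_state hneg
  exact ⟨φ, coe_mem_stateSpace (fun w hw => hφK w (hK' hw)) hφu, by simpa using hφK _ hvK'⟩

theorem IsOrderUnit.isCompact_stateSpace (hu : IsOrderUnit K u) :
    IsCompact (stateSpace K u) := by
  choose N hN using hu.exists_smul_add_mem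
  have hclosed : IsClosed (stateSpace K u) := by
    have hnonneg : IsClosed {φ : V → ℝ | ∀ v ∈ K, 0 ≤ φ v} := by
      simp only [Set.ofPred_forall]
      exact isClosed_biInter fun v _ => isClosed_le continuous_const (continuous_apply v)
    exact (LinearMap.isClosed_range_coe V ℝ (RingHom.id ℝ)).inter
      (hnonneg.inter (isClosed_eq (continuous_apply u) continuous_const))
  refine (isCompact_univ_pi fun v => isCompact_Icc (a := -N v) (b := N (-v))).of_isClosed_subset
    hclosed ?_
  rintro _ ⟨⟨φ, rfl⟩, hφK, hφu⟩ v -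
  have h1 := hφK _ (hN v)
  have h2 := hφK _ (hN (-v))
  simp only [map_add, map_smul, map_neg, hφu, smul_eq_mul, mul_one] at h1 h2
  constructor <;> simp only <;> linarith

theorem IsOrderUnit.exists_extreme_state_nonpos (hu : IsOrderUnit K u) {v : V} (hv : v ∉ K) :
    ∃ φ : V →ₗ[ℝ] ℝ, ⇑φ ∈ (stateSpace K u).extremePoints ℝ ∧ φ v ≤ 0 := by
  obtain ⟨φ₀, hφ₀, hφ₀v⟩ := hu.exists_state_nonpos hv
  let evalNeg : StrongDual ℝ (V → ℝ) := -ContinuousLinearMap.proj v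
  let face : Set (V → ℝ) := {φ ∈ stateSpace K u | ∀ ψ ∈ stateSpace K u, evalNeg ψ ≤ evalNeg φ}
  have hface : IsExposed ℝ (stateSpace K u) face := fun _ => ⟨evalNeg, rfl⟩
  have hne : face.Nonempty := by
    obtain ⟨φ, hφ, hmax⟩ := hu.isCompact_stateSpace.exists_isMaxOn ⟨_, hφ₀⟩
      evalNeg.continuous.continuousOn
    exact ⟨φ, hφ, fun ψ hψ => hmax hψ⟩
  obtain ⟨φ, hφ⟩ := (hface.isCompact hu.isCompact_stateSpace).extremePoints_nonempty hne
  obtain ⟨⟨φ, rfl⟩, -⟩ := hφ.1.1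
  refine ⟨φ, hface.isExtreme.extremePoints_subset_extremePoints hφ, ?_⟩
  exact (neg_le_neg_iff.1 (hφ.1.2 _ hφ₀)).trans hφ₀v

theorem eq_smul_of_le_extreme_state (huK : u ∈ K) {φ ψ : V →ₗ[ℝ] ℝ}
    (hφ : ⇑φ ∈ (stateSpace K u).extremePoints ℝ) (hψ : ∀ v ∈ K, 0 ≤ ψ v)
    (hle : ∀ v ∈ K, ψ v ≤ φ v) : ψ = ψ u • φ := by
  obtain ⟨⟨-, hφK, hφu⟩, hext⟩ := mem_extremePoints.1 hφ
  have hψ0 := hψ u huK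
  have hψ1 : ψ u ≤ 1 := hφu ▸ hle u huK
  -- `3φ = (φ + ψ) + (2φ - ψ)`, and both summands are positive multiples of states
  have h₁ : ⇑((1 + ψ u)⁻¹ • (φ + ψ)) ∈ stateSpace K u := by
    refine coe_mem_stateSpace (fun v hv => ?_) ?_
    · exact mul_nonneg (inv_nonneg.2 (by linarith)) (add_nonneg (hφK v hv) (hψ v hv))
    · simp only [LinearMap.smul_apply, LinearMap.add_apply, hφu, smul_eq_mul]
      exact inv_mul_cancel₀ (by linarith)
  have h₂ : ⇑((2 - ψ u)⁻¹ • ((2 : ℝ) • φ - ψ)) ∈ stateSpace K u := by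
    refine coe_mem_stateSpace (fun v hv => ?_) ?_
    · refine mul_nonneg (inv_nonneg.2 (by linarith)) ?_
      simp only [LinearMap.sub_apply, LinearMap.smul_apply, smul_eq_mul]
      linarith [hφK v hv, hle v hv]
    · simp only [LinearMap.smul_apply, LinearMap.sub_apply, hφu, smul_eq_mul, mul_one]
      exact inv_mul_cancel₀ (by linarith)
  have hmem : ⇑φ ∈ openSegment ℝ (⇑((1 + ψ u)⁻¹ • (φ + ψ)))
      (⇑((2 - ψ u)⁻¹ • ((2 : ℝ) • φ - ψ))) := by
    refine ⟨(1 + ψ u) / 3, (2 - ψ u) / 3, by linarith, by linarith, by ring, ?_⟩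
    have : 1 + ψ u ≠ 0 := by linarith
    have : 2 - ψ u ≠ 0 := by linarith
    ext v
    simp only [Pi.add_apply, Pi.smul_apply, LinearMap.smul_apply, LinearMap.add_apply,
      LinearMap.sub_apply, smul_eq_mul]
    field_simp
    ring
  ext v
  have hv := congrFun (hext _ h₁ _ h₂ hmem).1 v
  simp only [LinearMap.smul_apply, LinearMap.add_apply, smul_eq_mul] at hv ⊢
  rw [inv_mul_eq_iff_eq_mul₀ (by linarith)] at hv
  linarith

theorem extreme_state_comp_apply (huK : u ∈ K) {φ : V →ₗ[ℝ] ℝ}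
    (hφ : ⇑φ ∈ (stateSpace K u).extremePoints ℝ) {T : V →ₗ[ℝ] V} {R S : ℝ}
    (hR : ∀ v ∈ K, R • v - T v ∈ K) (hS : ∀ v ∈ K, S • v + T v ∈ K) (v : V) :
    φ (T v) = φ (T u) * φ v := by
  obtain ⟨⟨-, hφK, hφu⟩, -⟩ := mem_extremePoints.1 hφ
  have hR' (v) (hv : v ∈ K) : φ (T v) ≤ R * φ v := by simpa using hφK _ (hR v hv)
  have hS' (v) (hv : v ∈ K) : 0 ≤ S * φ v + φ (T v) := by simpa using hφK _ (hS v hv)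
  have hpos : 0 < S + R + 1 := by
    have h₁ := hR' u huK
    have h₂ := hS' u huK
    rw [hφu, mul_one] at h₁ h₂
    linarith
  let ψ : V →ₗ[ℝ] ℝ := (S + R + 1)⁻¹ • (S • φ + φ ∘ₗ T)
  have hψ (v) : ψ v = (S * φ v + φ (T v)) / (S + R + 1) := by
    simp only [ψ, LinearMap.smul_apply, LinearMap.add_apply, LinearMap.comp_apply, smul_eq_mul,
      div_eq_inv_mul]
  have hψφ : ψ = ψ u • φ := by
    refine eq_smul_of_le_extreme_state huK hφ (fun v hv => ?_) fun v hv => ?_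
    · rw [hψ]
      exact div_nonneg (hS' v hv) hpos.le
    · rw [hψ, div_le_iff₀ hpos]
      linarith [hR' v hv, hφK v hv]
  have hv := LinearMap.congr_fun hψφ v
  rw [hψ, hψ, LinearMap.smul_apply, smul_eq_mul, hφu, div_mul_eq_mul_div, div_left_inj' hpos.ne']
    at hv
  linarith

theorem exists_character_of_extreme_state {A : Type*} [CommRing A] [Algebra ℝ A] [Module A V]
    [IsScalarTower ℝ A V] (huK : u ∈ K) {φ : V →ₗ[ℝ] ℝ}
    (hφ : ⇑φ ∈ (stateSpace K u).extremePoints ℝ)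
    (hbdd : ∀ a : A, ∃ R : ℝ, ∀ v ∈ K, R • v - a • v ∈ K) :
    ∃ χ : A →ₐ[ℝ] ℝ, ∀ (a : A) (v : V), φ (a • v) = χ a * φ v := by
  have hφu : φ u = 1 := hφ.1.2.2
  have hmul (a : A) (v : V) : φ (a • v) = φ (a • u) * φ v := by
    obtain ⟨R, hR⟩ := hbdd a
    obtain ⟨S, hS⟩ := hbdd (-a)
    simp only [neg_smul, sub_neg_eq_add] at hS
    exact extreme_state_comp_apply huK hφ (T := Algebra.lsmul ℝ ℝ V a) hR hS v
  refine ⟨AlgHom.ofLinearMap (φ ∘ₗ (LinearMap.toSpanSingleton A V u).restrictScalars ℝ) ?_ ?_,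
    hmul⟩
  · simpa using hφu
  · intro a b
    simpa [mul_smul] using hmul a (b • u)

end States

section QuadraticModules

variable {A : Type*} [CommRing A] [Algebra ℝ A] {M : PointedCone ℝ A} {J : Ideal A} {u : A}

/-- The convex cone `M` is a quadratic module: it contains `1` and is stable under multiplication
by squares. -/
structure IsQuadraticModule (M : PointedCone ℝ A) : Prop where
  one_mem : 1 ∈ M
  sq_mul_mem : ∀ (a : A) {p : A}, p ∈ M → a ^ 2 * p ∈ M

theorem IsQuadraticModule.sq_mem (hM : IsQuadraticModule M) (a : A) : a ^ 2 ∈ M := by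
  simpa using hM.sq_mul_mem a hM.one_mem

/-- Every ring element is bounded by a real constant as a multiplication operator on the cone `M`.
For a quadratic module `M` this is a strong form of the archimedean property. -/
def HasBoundedMultipliers (M : PointedCone ℝ A) : Prop :=
  ∀ a : A, ∃ R : ℝ, ∀ p ∈ M, R • p - a * p ∈ M

/-- The ideal of all `q` such that every multiple of `q` is bounded below, modulo the cone `M`, by
a real multiple of `u`. -/
def dominatedIdeal (M : PointedCone ℝ A) (u : A) : Ideal A where
  carrier := {q | ∀ a : A, ∃ R : ℝ, R • u + a * q ∈ M}
  zero_mem' a := ⟨0, by simp⟩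
  add_mem' {p q} hp hq a := by
    obtain ⟨R, hR⟩ := hp a
    obtain ⟨S, hS⟩ := hq a
    refine ⟨R + S, ?_⟩
    convert M.add_mem hR hS using 1
    rw [add_smul]
    ring
  smul_mem' b q hq a := by
    obtain ⟨R, hR⟩ := hq (a * b)
    exact ⟨R, by rwa [smul_eq_mul, ← mul_assoc]⟩

theorem mem_dominatedIdeal_of_forall_mul_mem {q : A} (hq : ∀ a, a * q ∈ M) :
    q ∈ dominatedIdeal M u :=
  fun a => ⟨0, by simpa using hq a⟩

theorem HasBoundedMultipliers.mem_dominatedIdeal (hB : HasBoundedMultipliers M) {q : A}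
    (hq : q ∈ M) (huq : u - q ∈ M) : q ∈ dominatedIdeal M u := by
  intro a
  obtain ⟨R, hR⟩ := hB (-a)
  refine ⟨max R 0, ?_⟩
  have h₁ := M.smul_mem (le_max_right R 0) huq
  have h₂ := M.smul_mem (sub_nonneg.2 (le_max_left R 0)) hq
  convert M.add_mem (M.add_mem h₁ h₂) (hR q hq) using 1
  rw [smul_sub, sub_smul]
  ring

theorem HasBoundedMultipliers.mul_mem_dominatedIdeal (hB : HasBoundedMultipliers M)
    (hM : IsQuadraticModule M) {y z : A} (hy : u - y ^ 2 ∈ M) (hz : u - z ^ 2 ∈ M) :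
    y * z ∈ dominatedIdeal M u := by
  intro a
  obtain ⟨R, hR⟩ := hB (a ^ 2)
  refine ⟨(1 + max R 0) / 2, ?_⟩
  have h₁ := M.smul_mem (le_max_right R 0) hz
  have h₂ := M.smul_mem (sub_nonneg.2 (le_max_left R 0)) (hM.sq_mem z)
  have hsum := M.add_mem (M.add_mem (M.add_mem hy h₁) (M.add_mem h₂ (hR _ (hM.sq_mem z))))
    (hM.sq_mem (y + a * z))
  convert M.smul_mem (show (0 : ℝ) ≤ 1 / 2 by norm_num) hsum using 1
  have hexp : (y + a * z) ^ 2 = y ^ 2 + (2 : ℝ) • (a * (y * z)) + a ^ 2 * z ^ 2 := by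
    rw [two_smul]
    ring
  rw [hexp]
  module

/-- A pure state on the ideal `J`, relative to the cone `M` and the order unit `u` of `J`, as
produced by the theorem of Burgdorf, Scheiderer and Schweighofer: `φ` is nonnegative on `J ∩ M`,
normalized at `u`, and `A` acts on it through the character `χ`. Only the restriction of `φ` to `J`
matters. -/
structure IsPureState (M : PointedCone ℝ A) (J : Ideal A) (u : A) (χ : A →ₐ[ℝ] ℝ)
    (φ : A →ₗ[ℝ] ℝ) : Prop where
  nonneg : ∀ v ∈ J, v ∈ M → 0 ≤ φ v
  map_unit : φ u = 1
  map_mul : ∀ (a : A), ∀ v ∈ J, φ (a * v) = χ a * φ v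

theorem HasBoundedMultipliers.exists_isPureState (hB : HasBoundedMultipliers M) (huM : u ∈ M)
    (huJ : u ∈ J) (hJ : J ≤ dominatedIdeal M u) {F : A} (hFJ : F ∈ J) (hFM : F ∉ M) :
    ∃ χ φ, IsPureState M J u χ φ ∧ φ F ≤ 0 := by
  let K : PointedCone ℝ J := M.comap (J.subtype.restrictScalars ℝ)
  have hu : IsOrderUnit K ⟨u, huJ⟩ := ⟨huM, fun v => (hJ v.2 1).imp fun R hR =>
    show R • u + (v : A) ∈ M by simpa using hR⟩
  obtain ⟨φ, hφ, hφF⟩ := hu.exists_extreme_state_nonpos (v := ⟨F, hFJ⟩) hFM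
  obtain ⟨χ, hχ⟩ := exists_character_of_extreme_state (A := A) hu.mem hφ fun a =>
    (hB a).imp fun R hR v hv => hR v hv
  obtain ⟨ψ, hψ⟩ := LinearMap.exists_extend (p := J.restrictScalars ℝ) φ
  have hψφ (v : A) (hv : v ∈ J) : ψ v = φ ⟨v, hv⟩ := LinearMap.congr_fun hψ ⟨v, hv⟩
  refine ⟨χ, ψ, ⟨fun v hv hvM => ?_, ?_, fun a v hv => ?_⟩, (hψφ F hFJ).trans_le hφF⟩
  · exact (hψφ v hv).symm ▸ hφ.1.2.1 ⟨v, hv⟩ hvM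
  · exact (hψφ u huJ).trans hφ.1.2.2
  · rw [hψφ v hv, hψφ _ (J.mul_mem_left a hv)]
    exact hχ a ⟨v, hv⟩

namespace IsPureState

variable {χ : A →ₐ[ℝ] ℝ} {φ : A →ₗ[ℝ] ℝ}

theorem character_unit_mul (h : IsPureState M J u χ φ) (huJ : u ∈ J) {v : A} (hv : v ∈ J) :
    χ u * φ v = χ v := by
  rw [← h.map_mul u v hv, mul_comm, h.map_mul v u huJ, h.map_unit, mul_one]

theorem character_unit_nonneg (h : IsPureState M J u χ φ) (hM : IsQuadraticModule M)
    (huJ : u ∈ J) : 0 ≤ χ u := by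
  have := h.nonneg (u ^ 2) (J.pow_mem_of_mem huJ 2 two_pos) (hM.sq_mem u)
  rwa [sq, h.map_mul u u huJ, h.map_unit, mul_one] at this

theorem character_nonneg (h : IsPureState M J u χ φ) (hM : IsQuadraticModule M) (huJ : u ∈ J)
    (hχu : χ u ≠ 0) {p : A} (hp : p ∈ M) : 0 ≤ χ p := by
  have hpos : 0 < χ u := (h.character_unit_nonneg hM huJ).lt_of_ne' hχu
  have := h.nonneg (u ^ 2 * p) (J.mul_mem_right p (J.pow_mem_of_mem huJ 2 two_pos))
    (hM.sq_mul_mem u hp)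
  rw [show u ^ 2 * p = p * u * u by ring, h.map_mul _ u huJ, h.map_unit, mul_one, _root_.map_mul]
    at this
  exact nonneg_of_mul_nonneg_left this hpos

end IsPureState

theorem HasBoundedMultipliers.mem_of_forall_character_pos (hB : HasBoundedMultipliers M)
    (hM : IsQuadraticModule M) {F : A}
    (hF : ∀ χ : A →ₐ[ℝ] ℝ, (∀ p ∈ M, 0 ≤ χ p) → 0 < χ F) : F ∈ M := by
  by_contra hFM
  have htop : (⊤ : Ideal A) ≤ dominatedIdeal M 1 := fun q _ a => by
    obtain ⟨R, hR⟩ := hB (-(a * q))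
    exact ⟨R, by simpa using hR 1 hM.one_mem⟩
  obtain ⟨χ, φ, h, hφF⟩ := hB.exists_isPureState hM.one_mem Submodule.mem_top htop
    Submodule.mem_top hFM
  have hχ := hF χ fun p hp => h.character_nonneg hM Submodule.mem_top (by simp) hp
  have hφχ : φ F = χ F := by
    simpa using h.character_unit_mul Submodule.mem_top (Submodule.mem_top (x := F))
  linarith

end QuadraticModules

section Certificates

variable {N : ℕ} {ι κ : Type*} {Es : Finset ι} {ge : ι → RPoly N} {Is : Finset κ}
  {gi : κ → RPoly N} {x : Fin N → ℝ}

/-- The cone `Ideal(ge) + QM(gi)` of polynomials that are nonnegative for evident algebraic reasons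
where the equations `ge j = 0` (`j ∈ Es`) and the inequalities `gi j ≥ 0` (`j ∈ Is`) hold. -/
noncomputable def certCone (Es : Finset ι) (ge : ι → RPoly N) (Is : Finset κ) (gi : κ → RPoly N) :
    PointedCone ℝ (RPoly N) :=
  PointedCone.hull ℝ {p | (∃ a, a ^ 2 = p) ∨ (∃ j ∈ Is, ∃ a, gi j * a ^ 2 = p) ∨
    ∃ j ∈ Es, ∃ a, ge j * a = p}

theorem sq_mem_certCone (a : RPoly N) : a ^ 2 ∈ certCone Es ge Is gi :=
  PointedCone.subset_hull (Or.inl ⟨a, rfl⟩)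

theorem ineq_mul_sq_mem_certCone {j : κ} (hj : j ∈ Is) (a : RPoly N) :
    gi j * a ^ 2 ∈ certCone Es ge Is gi :=
  PointedCone.subset_hull (Or.inr (Or.inl ⟨j, hj, a, rfl⟩))

theorem eq_mul_mem_certCone {j : ι} (hj : j ∈ Es) (a : RPoly N) :
    ge j * a ∈ certCone Es ge Is gi :=
  PointedCone.subset_hull (Or.inr (Or.inr ⟨j, hj, a, rfl⟩))

theorem certCone_le_iff {T : PointedCone ℝ (RPoly N)} :
    certCone Es ge Is gi ≤ T ↔ (∀ a, a ^ 2 ∈ T) ∧ (∀ j ∈ Is, ∀ a, gi j * a ^ 2 ∈ T) ∧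
      ∀ j ∈ Es, ∀ a, ge j * a ∈ T := by
  refine ⟨fun h => ⟨fun a => h (sq_mem_certCone a), fun j hj a => h (ineq_mul_sq_mem_certCone hj a),
    fun j hj a => h (eq_mul_mem_certCone hj a)⟩, fun ⟨hsq, hin, heq⟩ => Submodule.span_le.2 ?_⟩
  rintro _ (⟨a, rfl⟩ | ⟨j, hj, a, rfl⟩ | ⟨j, hj, a, rfl⟩)
  exacts [hsq a, hin j hj a, heq j hj a]

theorem isQuadraticModule_certCone : IsQuadraticModule (certCone Es ge Is gi) where
  one_mem := by simpa using sq_mem_certCone (Es := Es) (ge := ge) (Is := Is) (gi := gi) 1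
  sq_mul_mem a p hp := by
    have h : certCone Es ge Is gi ≤
        (certCone Es ge Is gi).comap (LinearMap.mulLeft ℝ (a ^ 2)) := by
      refine certCone_le_iff.2 ⟨fun b => ?_, fun j hj b => ?_, fun j hj b => ?_⟩ <;>
        rw [PointedCone.mem_comap, LinearMap.mulLeft_apply]
      · rw [← mul_pow]
        exact sq_mem_certCone _
      · rw [mul_left_comm, ← mul_pow]
        exact ineq_mul_sq_mem_certCone hj _
      · rw [mul_left_comm]
        exact eq_mul_mem_certCone hj _
    exact h hp

/-- The points satisfying the constraints `ge j = 0` (`j ∈ Es`) and `gi j ≥ 0` (`j ∈ Is`). -/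
def feasibleSet (Es : Finset ι) (ge : ι → RPoly N) (Is : Finset κ) (gi : κ → RPoly N) :
    Set (Fin N → ℝ) :=
  {x | (∀ j ∈ Es, eval x (ge j) = 0) ∧ ∀ j ∈ Is, 0 ≤ eval x (gi j)}

theorem mem_feasibleSet_iff_forall_certCone :
    x ∈ feasibleSet Es ge Is gi ↔ ∀ p ∈ certCone Es ge Is gi, 0 ≤ eval x p := by
  constructor
  · rintro ⟨heq, hin⟩ p hp
    have h : certCone Es ge Is gi ≤ (PointedCone.positive ℝ ℝ).comap (aeval x).toLinearMap := by
      refine certCone_le_iff.2 ⟨fun a => ?_, fun j hj a => ?_, fun j hj a => ?_⟩ <;>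
        simp only [PointedCone.mem_comap, PointedCone.mem_positive, AlgHom.toLinearMap_apply,
          aeval_eq_eval, map_mul, map_pow]
      · exact sq_nonneg _
      · exact mul_nonneg (hin j hj) (sq_nonneg _)
      · rw [heq j hj, zero_mul]
    simpa [aeval_eq_eval] using h hp
  · intro h
    refine ⟨fun j hj => ?_, fun j hj => ?_⟩
    · have h₁ := h _ (eq_mul_mem_certCone hj 1)
      have h₂ := h _ (eq_mul_mem_certCone hj (-1))
      simp only [map_neg, mul_one, mul_neg] at h₁ h₂
      linarith
    · simpa using h _ (ineq_mul_sq_mem_certCone hj 1)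

/-- The cone of multipliers that map the cone `M` into itself. -/
def multiplierCone {A : Type*} [CommRing A] [Algebra ℝ A] (M : PointedCone ℝ A) :
    PointedCone ℝ A where
  carrier := {t | ∀ p ∈ M, t * p ∈ M}
  zero_mem' p _ := by simp
  add_mem' ht hs p hp := by simpa [add_mul] using M.add_mem (ht p hp) (hs p hp)
  smul_mem' r t ht p hp := by
    change (r : ℝ) • t * p ∈ M
    simpa only [smul_mul_assoc] using M.smul_mem r.2 (ht p hp)

theorem isQuadraticModule_multiplierCone {A : Type*} [CommRing A] [Algebra ℝ A]
    {M : PointedCone ℝ A} (hM : IsQuadraticModule M) : IsQuadraticModule (multiplierCone M) where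
  one_mem p hp := by simpa using hp
  sq_mul_mem a t ht p hp := by simpa [mul_assoc] using hM.sq_mul_mem a (ht p hp)

theorem IsQuadraticModule.exists_smul_one_sub_sq_mem {T : PointedCone ℝ (RPoly N)}
    (hT : IsQuadraticModule T) (hX : ∀ i, 1 - X i ^ 2 ∈ T) (a : RPoly N) :
    ∃ R : ℝ, 0 ≤ R ∧ R • 1 - a ^ 2 ∈ T := by
  induction a using MvPolynomial.induction_on with
  | C r => exact ⟨r ^ 2, sq_nonneg _, by simp [smul_eq_C_mul]⟩
  | add p q hp hq =>
    obtain ⟨R, hR, hp⟩ := hp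
    obtain ⟨S, hS, hq⟩ := hq
    refine ⟨2 * (R + S), by positivity, ?_⟩
    convert T.add_mem (T.smul_mem zero_le_two (T.add_mem hp hq)) (hT.sq_mem (p - q)) using 1
    simp only [smul_eq_C_mul, C_add, C_mul, show (C (2 : ℝ) : RPoly N) = 2 from rfl]
    ring
  | mul_X p i hp =>
    obtain ⟨R, hR, hp⟩ := hp
    refine ⟨R, hR, ?_⟩
    convert T.add_mem (T.smul_mem hR (hX i)) (hT.sq_mul_mem (X i) hp) using 1
    simp only [smul_eq_C_mul]
    ring

theorem IsQuadraticModule.exists_smul_one_sub_mem {T : PointedCone ℝ (RPoly N)}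
    (hT : IsQuadraticModule T) (hX : ∀ i, 1 - X i ^ 2 ∈ T) (a : RPoly N) :
    ∃ R : ℝ, R • 1 - a ∈ T := by
  obtain ⟨R, -, hR⟩ := hT.exists_smul_one_sub_sq_mem hX a
  refine ⟨(R + 1) / 2, ?_⟩
  convert T.smul_mem (show (0 : ℝ) ≤ 1 / 2 by norm_num) (T.add_mem hR (hT.sq_mem (a - 1))) using 1
  have hexp : (a - 1) ^ 2 = a ^ 2 - (2 : ℝ) • a + 1 := by
    rw [two_smul]
    ring
  rw [hexp]
  module

theorem hasBoundedMultipliers_certCone_of_sphere {j₀ : ι} (hj₀ : j₀ ∈ Es)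
    (hsphere : ge j₀ = (∑ i, (X i : RPoly N) ^ 2) - 1) :
    HasBoundedMultipliers (certCone Es ge Is gi) := by
  have hM : IsQuadraticModule (certCone Es ge Is gi) := isQuadraticModule_certCone
  have hT := isQuadraticModule_multiplierCone hM
  have hX (i : Fin N) : 1 - X i ^ 2 ∈ multiplierCone (certCone Es ge Is gi) := by
    have hsplit : (1 : RPoly N) - X i ^ 2 = (∑ k ∈ Finset.univ.erase i, X k ^ 2) + -ge j₀ := by
      rw [hsphere, ← Finset.add_sum_erase _ _ (Finset.mem_univ i)]
      ring
    rw [hsplit]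
    refine Submodule.add_mem _ (Submodule.sum_mem _ fun k _ => hT.sq_mem _) fun p _ => ?_
    rw [neg_mul_comm]
    exact eq_mul_mem_certCone hj₀ _
  intro a
  obtain ⟨R, hR⟩ := hT.exists_smul_one_sub_mem hX a
  exact ⟨R, fun p hp => by simpa [sub_mul] using hR p hp⟩

theorem isClosed_feasibleSet : IsClosed (feasibleSet Es ge Is gi) := by
  simp only [feasibleSet, Set.ofPred_and, Set.ofPred_forall]
  exact (isClosed_biInter fun j _ => isClosed_eq (continuous_eval _) continuous_const).inter
    (isClosed_biInter fun j _ => isClosed_le continuous_const (continuous_eval _))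

theorem HasBoundedMultipliers.isCompact_feasibleSet
    (hB : HasBoundedMultipliers (certCone Es ge Is gi)) : IsCompact (feasibleSet Es ge Is gi) := by
  choose R hR using hB
  have hbox := isCompact_univ_pi fun i => isCompact_Icc (a := -R (-X i)) (b := R (X i))
  refine hbox.of_isClosed_subset isClosed_feasibleSet fun x hx i _ => ?_
  have hbound (a : RPoly N) : eval x a ≤ R a := by
    have := mem_feasibleSet_iff_forall_certCone.1 hx _ (hR a 1 isQuadraticModule_certCone.one_mem)
    simpa [smul_eval] using this
  have h₁ := hbound (X i)
  have h₂ := hbound (-X i)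
  simp only [map_neg, eval_X] at h₁ h₂
  exact ⟨by linarith, h₁⟩

theorem HasBoundedMultipliers.mem_certCone_of_pos
    (hB : HasBoundedMultipliers (certCone Es ge Is gi)) {F : RPoly N}
    (hF : ∀ x ∈ feasibleSet Es ge Is gi, 0 < eval x F) : F ∈ certCone Es ge Is gi := by
  refine hB.mem_of_forall_character_pos isQuadraticModule_certCone fun χ hχ => ?_
  obtain ⟨x, rfl⟩ : ∃ x, χ = aeval x := ⟨_, aeval_unique χ⟩
  simp only [aeval_eq_eval] at hχ ⊢
  exact hF x (mem_feasibleSet_iff_forall_certCone.2 hχ)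

end Certificates

section Optimality

variable {N : ℕ} {ι κ : Type*} {Es : Finset ι} {ge : ι → RPoly N} {Is : Finset κ}
  {gi : κ → RPoly N} {F : RPoly N} {z : Fin N → ℝ} {lamE : ι → ℝ} {lamI : κ → ℝ}

open Matrix

/-- The vector of polynomials `x - z`. -/
noncomputable def coordAt (z : Fin N → ℝ) : Fin N → RPoly N := fun k => X k - C (z k)

theorem eval_coordAt (x z : Fin N → ℝ) (k : Fin N) : eval x (coordAt z k) = x k - z k := by
  simp [coordAt]

theorem pderiv_coordAt (k l : Fin N) : pderiv k (coordAt z l) = if k = l then 1 else 0 := by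
  simp [coordAt, pderiv_X, Pi.single_apply, eq_comm]

theorem eval_coordAt_dotProduct_mulVec (x : Fin N → ℝ) (A : Matrix (Fin N) (Fin N) (RPoly N)) :
    eval x (coordAt z ⬝ᵥ A *ᵥ coordAt z) = (x - z) ⬝ᵥ A.map (eval x) *ᵥ (x - z) := by
  have hcoord : ⇑(eval x) ∘ coordAt z = x - z := funext fun k => eval_coordAt x z k
  rw [RingHom.map_dotProduct, hcoord]
  congr 1
  ext k
  rw [Function.comp_apply, RingHom.map_mulVec, hcoord]

theorem pderiv_dotProduct_coordAt (b : Fin N → RPoly N) (k : Fin N) :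
    pderiv k (b ⬝ᵥ coordAt z) = b k + (fun l => pderiv k (b l)) ⬝ᵥ coordAt z := by
  simp only [dotProduct, map_sum, Derivation.leibniz, pderiv_coordAt, smul_eq_mul, mul_ite, mul_one,
    mul_zero, Finset.sum_add_distrib, Finset.sum_ite_eq, Finset.mem_univ, if_true]
  exact congrArg _ (Finset.sum_congr rfl fun l _ => mul_comm _ _)

theorem eval_dotProduct_coordAt_self (b : Fin N → RPoly N) : eval z (b ⬝ᵥ coordAt z) = 0 := by
  simp [dotProduct, eval_coordAt]

theorem exists_eq_C_add_dotProduct_coordAt (p : RPoly N) (z : Fin N → ℝ) :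
    ∃ b : Fin N → RPoly N, p = C (eval z p) + b ⬝ᵥ coordAt z := by
  induction p using MvPolynomial.induction_on with
  | C r => exact ⟨0, by simp⟩
  | add p q hp hq =>
    obtain ⟨b, hb⟩ := hp
    obtain ⟨b', hb'⟩ := hq
    refine ⟨b + b', ?_⟩
    rw [add_dotProduct, map_add, C_add]
    linear_combination hb + hb'
  | mul_X p i hp =>
    obtain ⟨b, hb⟩ := hp
    refine ⟨(X i : RPoly N) • b + Pi.single i (C (eval z p)), ?_⟩
    rw [add_dotProduct, smul_dotProduct, single_dotProduct, coordAt, map_mul, eval_X, C_mul,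
      smul_eq_mul]
    linear_combination X i * hb

theorem exists_taylor_one (p : RPoly N) (z : Fin N → ℝ) :
    ∃ b : Fin N → RPoly N, p = C (eval z p) + b ⬝ᵥ coordAt z ∧ ∀ k, eval z (b k) = gradP p z k := by
  obtain ⟨b, hb⟩ := exists_eq_C_add_dotProduct_coordAt p z
  refine ⟨b, hb, fun k => ?_⟩
  rw [gradP, hb, map_add, pderiv_C, zero_add, pderiv_dotProduct_coordAt, map_add,
    eval_dotProduct_coordAt_self, add_zero]

theorem exists_taylor_two {p : RPoly N} (h₀ : eval z p = 0) (h₁ : gradP p z = 0) :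
    ∃ A : Matrix (Fin N) (Fin N) (RPoly N), p = coordAt z ⬝ᵥ A *ᵥ coordAt z ∧
      ∀ k l, eval z (A k l) + eval z (A l k) = hessP p z k l := by
  obtain ⟨b, hb, hgrad⟩ := exists_taylor_one p z
  choose A hA hAgrad using fun k => exists_taylor_one (b k) z
  have hbA : b = A *ᵥ coordAt z := by
    ext1 k
    have hk := hA k
    rwa [hgrad, h₁, Pi.zero_apply, C_0, zero_add] at hk
  refine ⟨A, ?_, fun k l => ?_⟩
  · rw [dotProduct_comm, ← hbA]
    simpa [h₀] using hb
  · have hderiv : pderiv l p = b l + (fun m => pderiv l (b m)) ⬝ᵥ coordAt z := by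
      conv_lhs => rw [hb]
      rw [map_add, pderiv_C, zero_add, pderiv_dotProduct_coordAt]
    rw [hAgrad, hAgrad, hessP, hderiv, map_add, pderiv_dotProduct_coordAt, map_add, map_add,
      eval_dotProduct_coordAt_self, add_zero, gradP, gradP, add_comm]

/-- The Lagrangian of the problem: minimize `F` subject to `ge j = 0` (`j ∈ Es`) and `gi j ≥ 0`
(`j ∈ Is`), for the multipliers `lamE` and `lamI`. -/
noncomputable def lagrangian (Es : Finset ι) (ge : ι → RPoly N) (Is : Finset κ) (gi : κ → RPoly N)
    (F : RPoly N) (lamE : ι → ℝ) (lamI : κ → ℝ) : RPoly N :=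
  F - ∑ j ∈ Es, C (lamE j) * ge j - ∑ j ∈ Is, C (lamI j) * gi j

/-- `v` is orthogonal to the gradients at `z` of the equality constraints and of the inequality
constraints active at `z`. -/
def IsTangentVector (Es : Finset ι) (ge : ι → RPoly N) (Is : Finset κ) (gi : κ → RPoly N)
    (z v : Fin N → ℝ) : Prop :=
  (∀ j ∈ Es, v ⬝ᵥ gradP (ge j) z = 0) ∧
    ∀ j ∈ Is, eval z (gi j) = 0 → v ⬝ᵥ gradP (gi j) z = 0

/-- `lamE` and `lamI` are Lagrange multipliers at `z` satisfying strict complementarity and the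
second-order sufficient condition. No constraint qualification is included. -/
structure StrictKKT (Es : Finset ι) (ge : ι → RPoly N) (Is : Finset κ) (gi : κ → RPoly N)
    (F : RPoly N) (z : Fin N → ℝ) (lamE : ι → ℝ) (lamI : κ → ℝ) : Prop where
  stationary : gradP (lagrangian Es ge Is gi F lamE lamI) z = 0
  nonneg : ∀ j ∈ Is, 0 ≤ lamI j
  complementary : ∀ j ∈ Is, lamI j * eval z (gi j) = 0
  strict : ∀ j ∈ Is, 0 < lamI j + eval z (gi j)
  second_order : ∀ v ≠ 0, IsTangentVector Es ge Is gi z v →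
    0 < v ⬝ᵥ (hessP (lagrangian Es ge Is gi F lamE lamI) z : Matrix (Fin N) (Fin N) ℝ) *ᵥ v

theorem OptCondsAt.exists_strictKKT {ι κ : Type} {Es : Finset ι} {ge : ι → RPoly N} {Is : Finset κ}
    {gi : κ → RPoly N} (h : OptCondsAt Es ge Is gi F z) :
    ∃ lamE lamI, StrictKKT Es ge Is gi F z lamE lamI := by
  obtain ⟨-, lamE, lamI, hgrad, hlam, hstrict, hhess⟩ := h
  refine ⟨lamE, lamI, ?_, fun j hj => (hlam j hj).1, fun j hj => (hlam j hj).2, hstrict,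
    fun v hv htan => ?_⟩
  · ext k
    have hk := congrFun hgrad k
    simp only [gradP, Pi.add_apply, Finset.sum_apply, Pi.smul_apply, smul_eq_mul] at hk
    simp only [gradP, lagrangian, map_sub, map_sum, pderiv_C_mul, map_mul, eval_C, hk,
      Pi.zero_apply]
    ring
  · refine (hhess v hv htan.1 htan.2).trans_eq ?_
    simp only [dotProduct, mulVec, Finset.mul_sum, ← mul_assoc, hessP, lagrangian, map_sub, map_sum,
      pderiv_C_mul, map_mul, eval_C]

namespace StrictKKT

theorem multiplier_eq_zero (h : StrictKKT Es ge Is gi F z lamE lamI) {j : κ} (hj : j ∈ Is)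
    (hz : eval z (gi j) ≠ 0) : lamI j = 0 :=
  (mul_eq_zero.1 (h.complementary j hj)).resolve_right hz

theorem multiplier_pos (h : StrictKKT Es ge Is gi F z lamE lamI) {j : κ} (hj : j ∈ Is)
    (hz : eval z (gi j) = 0) : 0 < lamI j := by
  simpa [hz] using h.strict j hj

theorem exists_expansion (h : StrictKKT Es ge Is gi F z lamE lamI)
    (hz : z ∈ feasibleSet Es ge Is gi) (hF : eval z F = 0) :
    ∃ A : Matrix (Fin N) (Fin N) (RPoly N),
      F = ∑ j ∈ Es, C (lamE j) * ge j + ∑ j ∈ Is, C (lamI j) * gi j +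
        coordAt z ⬝ᵥ A *ᵥ coordAt z ∧
      ∀ v ≠ 0, IsTangentVector Es ge Is gi z v → 0 < v ⬝ᵥ A.map (eval z) *ᵥ v := by
  have hL : eval z (lagrangian Es ge Is gi F lamE lamI) = 0 := by
    simp only [lagrangian, map_sub, map_sum, map_mul, eval_C, hF]
    rw [Finset.sum_eq_zero fun j hj => by rw [hz.1 j hj, mul_zero],
      Finset.sum_eq_zero h.complementary, sub_zero, sub_zero]
  obtain ⟨A, hA, hhess⟩ := exists_taylor_two hL h.stationary
  refine ⟨A, ?_, fun v hv htan => ?_⟩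
  · rw [← hA, lagrangian]
    ring
  · have hpos := h.second_order v hv htan
    have hsplit : (hessP (lagrangian Es ge Is gi F lamE lamI) z : Matrix (Fin N) (Fin N) ℝ) =
        A.map (eval z) + (A.map (eval z))ᵀ := by
      ext k l
      exact (hhess k l).symm
    have htranspose : v ⬝ᵥ (A.map (eval z))ᵀ *ᵥ v = v ⬝ᵥ A.map (eval z) *ᵥ v := by
      rw [mulVec_transpose, dotProduct_comm, ← dotProduct_mulVec]
    rw [hsplit, add_mulVec, dotProduct_add, htranspose] at hpos
    linarith

end StrictKKT

end Optimality

section IsolatedZeros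

open Filter Topology Matrix

variable {N : ℕ} {ι κ : Type*} {Es : Finset ι} {ge : ι → RPoly N} {Is : Finset κ}
  {gi : κ → RPoly N} {F : RPoly N} {z : Fin N → ℝ} {lamE : ι → ℝ} {lamI : κ → ℝ}

/-- The feasible points where `F` vanishes: the minimizers, when `F` is nonnegative. -/
def zeroSet (Es : Finset ι) (ge : ι → RPoly N) (Is : Finset κ) (gi : κ → RPoly N) (F : RPoly N) :
    Set (Fin N → ℝ) :=
  {x ∈ feasibleSet Es ge Is gi | eval x F = 0}

theorem isClosed_zeroSet : IsClosed (zeroSet Es ge Is gi F) :=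
  isClosed_feasibleSet.inter (isClosed_eq (continuous_eval F) continuous_const)

theorem tendsto_dotProduct {α : Type*} {l : Filter α} {u v : α → Fin N → ℝ} {u₀ v₀ : Fin N → ℝ}
    (hu : Tendsto u l (𝓝 u₀)) (hv : Tendsto v l (𝓝 v₀)) :
    Tendsto (fun m => u m ⬝ᵥ v m) l (𝓝 (u₀ ⬝ᵥ v₀)) :=
  ((continuous_fst.dotProduct continuous_snd).tendsto (u₀, v₀)).comp (hu.prodMk_nhds hv)

theorem tendsto_map_eval_mulVec {α : Type*} {l : Filter α} {y v : α → Fin N → ℝ} {v₀ : Fin N → ℝ}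
    (A : Matrix (Fin N) (Fin N) (RPoly N)) (hy : Tendsto y l (𝓝 z)) (hv : Tendsto v l (𝓝 v₀)) :
    Tendsto (fun m => A.map (eval (y m)) *ᵥ v m) l (𝓝 (A.map (eval z) *ᵥ v₀)) :=
  tendsto_pi_nhds.2 fun k => tendsto_dotProduct
    (tendsto_pi_nhds.2 fun l => ((continuous_eval (A k l)).tendsto z).comp hy) hv

theorem tendsto_mul_eval_of_eval_eq_zero {α : Type*} {l : Filter α} {c : α → ℝ}
    {d : α → Fin N → ℝ} {w : Fin N → ℝ} (hd : Tendsto d l (𝓝 0))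
    (hcd : Tendsto (fun m => c m • d m) l (𝓝 w)) {p : RPoly N} (hp : eval z p = 0) :
    Tendsto (fun m => c m * eval (z + d m) p) l (𝓝 (w ⬝ᵥ gradP p z)) := by
  obtain ⟨b, hb, hgrad⟩ := exists_taylor_one p z
  have hx : Tendsto (fun m => z + d m) l (𝓝 z) := by simpa using hd.const_add z
  have hb_lim : Tendsto (fun m k => eval (z + d m) (b k)) l (𝓝 (gradP p z)) :=
    tendsto_pi_nhds.2 fun k => hgrad k ▸ ((continuous_eval (b k)).tendsto z).comp hx
  have heq (m : α) : c m * eval (z + d m) p = (c m • d m) ⬝ᵥ fun k => eval (z + d m) (b k) := by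
    conv_lhs => rw [hb]
    rw [hp, C_0, zero_add, smul_dotProduct, smul_eq_mul, dotProduct_comm]
    simp [dotProduct, eval_coordAt]
  simp only [heq]
  exact tendsto_dotProduct hcd hb_lim

theorem eval_quadratic_expansion {A : Matrix (Fin N) (Fin N) (RPoly N)} {x : Fin N → ℝ}
    (hF : F = ∑ j ∈ Es, C (lamE j) * ge j + ∑ j ∈ Is, C (lamI j) * gi j +
      coordAt z ⬝ᵥ A *ᵥ coordAt z) (hx : x ∈ feasibleSet Es ge Is gi) :
    eval x F = ∑ j ∈ Is, lamI j * eval x (gi j) + (x - z) ⬝ᵥ A.map (eval x) *ᵥ (x - z) := by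
  rw [hF, map_add, map_add, eval_coordAt_dotProduct_mulVec]
  simp only [map_sum, map_mul, eval_C]
  rw [Finset.sum_eq_zero fun j hj => by rw [hx.1 j hj, mul_zero], zero_add]

theorem StrictKKT.multiplier_mul_eval_nonneg (h : StrictKKT Es ge Is gi F z lamE lamI)
    {x : Fin N → ℝ} (hx : x ∈ feasibleSet Es ge Is gi) {j : κ} (hj : j ∈ Is) :
    0 ≤ lamI j * eval x (gi j) :=
  mul_nonneg (h.nonneg j hj) (hx.2 j hj)

section Directions

variable {α : Type*} {l : Filter α} {c : α → ℝ} {d : α → Fin N → ℝ} {w : Fin N → ℝ}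
  {A : Matrix (Fin N) (Fin N) (RPoly N)}

-- Each active term of the expansion is bounded by the quadratic one, which is `o(‖d‖)`.
theorem StrictKKT.isTangentVector_of_tendsto [l.NeBot] (h : StrictKKT Es ge Is gi F z lamE lamI)
    (hz : z ∈ feasibleSet Es ge Is gi)
    (hF : F = ∑ j ∈ Es, C (lamE j) * ge j + ∑ j ∈ Is, C (lamI j) * gi j +
      coordAt z ⬝ᵥ A *ᵥ coordAt z)
    (hd : Tendsto d l (𝓝 0)) (hcd : Tendsto (fun m => c m • d m) l (𝓝 w))
    (hmem : ∀ᶠ m in l, z + d m ∈ zeroSet Es ge Is gi F) : IsTangentVector Es ge Is gi z w := by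
  have hx : Tendsto (fun m => z + d m) l (𝓝 z) := by simpa using hd.const_add z
  refine ⟨fun j hj => ?_, fun j hj hj0 => ?_⟩
  · refine tendsto_nhds_unique (tendsto_mul_eval_of_eval_eq_zero hd hcd (hz.1 j hj)) ?_
    refine tendsto_const_nhds.congr' (hmem.mono fun m hm => ?_)
    simp only [hm.1.1 j hj, mul_zero]
  · have hquad : Tendsto (fun m => (c m • d m) ⬝ᵥ A.map (eval (z + d m)) *ᵥ d m) l (𝓝 0) := by
      simpa using tendsto_dotProduct hcd (tendsto_map_eval_mulVec A hx hd)
    have hlim : Tendsto (fun m => c m * (lamI j * eval (z + d m) (gi j))) l (𝓝 0) := by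
      refine squeeze_zero_norm' (hmem.mono fun m hm => ?_) (by simpa using hquad.norm)
      have hle : lamI j * eval (z + d m) (gi j) ≤ -(d m ⬝ᵥ A.map (eval (z + d m)) *ᵥ d m) := by
        have hexp := eval_quadratic_expansion hF hm.1
        rw [hm.2, add_sub_cancel_left] at hexp
        linarith [Finset.single_le_sum (fun j hj => h.multiplier_mul_eval_nonneg hm.1 hj) hj]
      rw [norm_mul, Real.norm_of_nonneg (h.multiplier_mul_eval_nonneg hm.1 hj)]
      exact mul_le_mul_of_nonneg_left (hle.trans (neg_le_abs _)) (norm_nonneg _)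
    have hlim' := (tendsto_mul_eval_of_eval_eq_zero hd hcd hj0).const_mul (lamI j)
    simp only [mul_left_comm (lamI j)] at hlim'
    exact (mul_eq_zero.1 (tendsto_nhds_unique hlim' hlim)).resolve_left
      (h.multiplier_pos hj hj0).ne'

theorem StrictKKT.dotProduct_mulVec_nonpos_of_tendsto [l.NeBot]
    (h : StrictKKT Es ge Is gi F z lamE lamI)
    (hF : F = ∑ j ∈ Es, C (lamE j) * ge j + ∑ j ∈ Is, C (lamI j) * gi j +
      coordAt z ⬝ᵥ A *ᵥ coordAt z)
    (hd : Tendsto d l (𝓝 0)) (hcd : Tendsto (fun m => c m • d m) l (𝓝 w))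
    (hmem : ∀ᶠ m in l, z + d m ∈ zeroSet Es ge Is gi F) : w ⬝ᵥ A.map (eval z) *ᵥ w ≤ 0 := by
  have hx : Tendsto (fun m => z + d m) l (𝓝 z) := by simpa using hd.const_add z
  refine le_of_tendsto (tendsto_dotProduct hcd (tendsto_map_eval_mulVec A hx hcd))
    (hmem.mono fun m hm => ?_)
  have hexp := eval_quadratic_expansion hF hm.1
  rw [hm.2, add_sub_cancel_left] at hexp
  rw [smul_dotProduct, mulVec_smul, dotProduct_smul, smul_smul]
  refine mul_nonpos_of_nonneg_of_nonpos (mul_self_nonneg _) ?_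
  linarith [Finset.sum_nonneg fun j hj => h.multiplier_mul_eval_nonneg hm.1 hj]

end Directions

theorem StrictKKT.not_accPt_zeroSet (h : StrictKKT Es ge Is gi F z lamE lamI)
    (hz : z ∈ zeroSet Es ge Is gi F) : ¬AccPt z (𝓟 (zeroSet Es ge Is gi F)) := by
  intro hacc
  obtain ⟨A, hF, hpos⟩ := h.exists_expansion hz.1 hz.2
  obtain ⟨w, hw, hw0⟩ := tangentConeAt_nonempty_of_properSpace (𝕜 := ℝ) hacc
  obtain ⟨α, l, hl, c, d, hd, hmem, hcd⟩ := exists_fun_of_mem_tangentConeAt hw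
  exact (h.dotProduct_mulVec_nonpos_of_tendsto hF hd hcd hmem).not_gt
    (hpos w hw0 (h.isTangentVector_of_tendsto hz.1 hF hd hcd hmem))

theorem finite_zeroSet (hK : IsCompact (feasibleSet Es ge Is gi))
    (hkkt : ∀ z ∈ zeroSet Es ge Is gi F, ∃ lamE lamI, StrictKKT Es ge Is gi F z lamE lamI) :
    (zeroSet Es ge Is gi F).Finite := by
  by_contra hinf
  obtain ⟨z, hz, hacc⟩ := Set.Infinite.exists_accPt_of_subset_isCompact hinf
    (hK.of_isClosed_subset isClosed_zeroSet fun x hx => hx.1) subset_rfl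
  obtain ⟨lamE, lamI, h⟩ := hkkt z hz
  exact h.not_accPt_zeroSet hz hacc

end IsolatedZeros

section LocalIdeals

open Matrix

theorem trace_mul_pos_of_posSemidef {n : Type*} [Fintype n] {Φ B : Matrix n n ℝ}
    (hΦ : Φ.PosSemidef) (hΦ0 : Φ ≠ 0)
    (hB : ∀ v ≠ 0, (∀ g, Φ *ᵥ g = 0 → v ⬝ᵥ g = 0) → 0 < v ⬝ᵥ B *ᵥ v) :
    0 < (B * Φ).trace := by
  obtain ⟨m, v, hv⟩ := posSemidef_iff_eq_sum_vecMulVec.1 hΦ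
  simp only [star_trivial] at hv
  have horth (i : Fin m) (g : n → ℝ) (hg : Φ *ᵥ g = 0) : v i ⬝ᵥ g = 0 := by
    have hquad : ∑ i, (v i ⬝ᵥ g) ^ 2 = g ⬝ᵥ Φ *ᵥ g := by
      simp [hv, sum_mulVec, vecMulVec_mulVec, sum_dotProduct, sq, dotProduct_comm g]
    rw [hg, dotProduct_zero, Finset.sum_eq_zero_iff_of_nonneg fun i _ => sq_nonneg _] at hquad
    exact pow_eq_zero_iff two_ne_zero |>.1 (hquad i (Finset.mem_univ i))
  have htrace : (B * Φ).trace = ∑ i, v i ⬝ᵥ B *ᵥ v i := by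
    simp [hv, Matrix.mul_sum, trace_sum, mul_vecMulVec, trace_vecMulVec, dotProduct_comm]
  have hterm (i : Fin m) (hi : v i ≠ 0) : 0 < v i ⬝ᵥ B *ᵥ v i := hB _ hi (horth i)
  obtain ⟨i, hi⟩ : ∃ i, v i ≠ 0 := by
    by_contra! h
    exact hΦ0 (by simp [hv, h])
  rw [htrace]
  refine Finset.sum_pos' (fun i _ => ?_) ⟨i, Finset.mem_univ i, hterm i hi⟩
  obtain h0 | h0 := eq_or_ne (v i) 0
  · simp [h0]
  · exact (hterm i h0).le

theorem sum_sub_mem {α G S : Type*} [AddCommGroup G] [SetLike S G] [AddSubmonoidClass S G] {M : S}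
    {s : Finset α} {f : α → G} (hf : ∀ i ∈ s, f i ∈ M) {i : α} (hi : i ∈ s) :
    ∑ i ∈ s, f i - f i ∈ M := by
  classical
  rw [← Finset.sum_erase_eq_sub hi]
  exact sum_mem fun j hj => hf j (Finset.mem_of_mem_erase hj)

variable {N : ℕ} {ι κ : Type*} {Es : Finset ι} {ge : ι → RPoly N} {Is : Finset κ}
  {gi : κ → RPoly N} {F e u : RPoly N} {z : Fin N → ℝ} {lamE : ι → ℝ} {lamI : κ → ℝ}

/-- The indices of the inequality constraints that are active at `z`. -/
noncomputable def activeSet (Is : Finset κ) (gi : κ → RPoly N) (z : Fin N → ℝ) : Finset κ :=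
  {j ∈ Is | eval z (gi j) = 0}

/-- The ideal generated by the equality constraints, the active inequality constraints and the
products of two coordinates at `z`, the latter two multiplied by `e ^ 2` in order to confine the
conditions to `z` and other points where `e` does not vanish. -/
noncomputable def localIdeal (Es : Finset ι) (ge : ι → RPoly N) (Is : Finset κ) (gi : κ → RPoly N)
    (e : RPoly N) (z : Fin N → ℝ) : Ideal (RPoly N) :=
  Ideal.span {q | (∃ j ∈ Es, q = ge j) ∨ (∃ j ∈ activeSet Is gi z, q = gi j * e ^ 2) ∨
    ∃ k l, q = e * coordAt z k * (e * coordAt z l)}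

/-- The order unit of `localIdeal`: the sum of those of its generators that are nonnegative on the
feasible set. -/
noncomputable def localUnit (Is : Finset κ) (gi : κ → RPoly N) (e : RPoly N) (z : Fin N → ℝ) :
    RPoly N :=
  ∑ k, (e * coordAt z k) ^ 2 + ∑ j ∈ activeSet Is gi z, gi j * e ^ 2

theorem eq_mem_localIdeal {j : ι} (hj : j ∈ Es) : ge j ∈ localIdeal Es ge Is gi e z :=
  Ideal.subset_span (Or.inl ⟨j, hj, rfl⟩)

theorem active_mul_sq_mem_localIdeal {j : κ} (hj : j ∈ activeSet Is gi z) :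
    gi j * e ^ 2 ∈ localIdeal Es ge Is gi e z :=
  Ideal.subset_span (Or.inr (Or.inl ⟨j, hj, rfl⟩))

theorem coordAt_mul_coordAt_mem_localIdeal (k l : Fin N) :
    e * coordAt z k * (e * coordAt z l) ∈ localIdeal Es ge Is gi e z :=
  Ideal.subset_span (Or.inr (Or.inr ⟨k, l, rfl⟩))

theorem sq_mul_coordAt_quadratic_mem_localIdeal (A : Matrix (Fin N) (Fin N) (RPoly N)) :
    e ^ 2 * (coordAt z ⬝ᵥ A *ᵥ coordAt z) ∈ localIdeal Es ge Is gi e z := by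
  have hexp : e ^ 2 * (coordAt z ⬝ᵥ A *ᵥ coordAt z) =
      ∑ k, ∑ l, A k l * (e * coordAt z k * (e * coordAt z l)) := by
    simp only [dotProduct, mulVec, Finset.mul_sum]
    exact Finset.sum_congr rfl fun k _ => Finset.sum_congr rfl fun l _ => by ring
  rw [hexp]
  exact sum_mem fun k _ => sum_mem fun l _ =>
    Ideal.mul_mem_left _ _ (coordAt_mul_coordAt_mem_localIdeal k l)

theorem localUnit_mem_localIdeal : localUnit Is gi e z ∈ localIdeal Es ge Is gi e z := by
  refine add_mem (sum_mem fun k _ => ?_) (sum_mem fun j hj => active_mul_sq_mem_localIdeal hj)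
  rw [sq]
  exact coordAt_mul_coordAt_mem_localIdeal k k

theorem active_mul_sq_mem_certCone {j : κ} (hj : j ∈ activeSet Is gi z) :
    gi j * e ^ 2 ∈ certCone Es ge Is gi :=
  ineq_mul_sq_mem_certCone (Finset.mem_filter.1 hj).1 e

theorem localUnit_mem_certCone : localUnit Is gi e z ∈ certCone Es ge Is gi :=
  add_mem (sum_mem fun _ _ => sq_mem_certCone _)
    (sum_mem fun _ hj => active_mul_sq_mem_certCone hj)

theorem localUnit_sub_sq_mem_certCone (k : Fin N) :
    localUnit Is gi e z - (e * coordAt z k) ^ 2 ∈ certCone Es ge Is gi := by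
  rw [localUnit, add_sub_right_comm]
  exact add_mem (sum_sub_mem (fun _ _ => sq_mem_certCone _) (Finset.mem_univ k))
    (sum_mem fun _ hj => active_mul_sq_mem_certCone hj)

theorem localUnit_sub_active_mem_certCone {j : κ} (hj : j ∈ activeSet Is gi z) :
    localUnit Is gi e z - gi j * e ^ 2 ∈ certCone Es ge Is gi := by
  rw [localUnit, add_sub_assoc]
  exact add_mem (sum_mem fun _ _ => sq_mem_certCone _)
    (sum_sub_mem (fun _ hj => active_mul_sq_mem_certCone hj) hj)

theorem HasBoundedMultipliers.localIdeal_le_dominatedIdeal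
    (hB : HasBoundedMultipliers (certCone Es ge Is gi))
    (hu : u - localUnit Is gi e z ∈ certCone Es ge Is gi) :
    localIdeal Es ge Is gi e z ≤ dominatedIdeal (certCone Es ge Is gi) u := by
  have hu' {q : RPoly N} (hq : localUnit Is gi e z - q ∈ certCone Es ge Is gi) :
      u - q ∈ certCone Es ge Is gi := by
    simpa using add_mem hu hq
  refine Ideal.span_le.2 ?_
  rintro _ (⟨j, hj, rfl⟩ | ⟨j, hj, rfl⟩ | ⟨k, l, rfl⟩)
  · exact mem_dominatedIdeal_of_forall_mul_mem fun a => mul_comm a _ ▸ eq_mul_mem_certCone hj a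
  · exact hB.mem_dominatedIdeal (active_mul_sq_mem_certCone hj)
      (hu' (localUnit_sub_active_mem_certCone hj))
  · exact hB.mul_mem_dominatedIdeal isQuadraticModule_certCone
      (hu' (localUnit_sub_sq_mem_certCone k)) (hu' (localUnit_sub_sq_mem_certCone l))

theorem StrictKKT.C_mul_mul_sq_mem_localIdeal (h : StrictKKT Es ge Is gi F z lamE lamI) {j : κ}
    (hj : j ∈ Is) : C (lamI j) * gi j * e ^ 2 ∈ localIdeal Es ge Is gi e z := by
  by_cases hz : eval z (gi j) = 0
  · rw [mul_assoc]
    exact Ideal.mul_mem_left _ _ (active_mul_sq_mem_localIdeal (Finset.mem_filter.2 ⟨hj, hz⟩))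
  · simp [h.multiplier_eq_zero hj hz]

theorem StrictKKT.sq_mul_mem_localIdeal (h : StrictKKT Es ge Is gi F z lamE lamI)
    (hz : z ∈ zeroSet Es ge Is gi F) : e ^ 2 * F ∈ localIdeal Es ge Is gi e z := by
  obtain ⟨A, hF, -⟩ := h.exists_expansion hz.1 hz.2
  rw [hF, mul_add, mul_add, Finset.mul_sum, Finset.mul_sum]
  refine add_mem (add_mem (sum_mem fun j hj => ?_) (sum_mem fun j hj => ?_))
    (sq_mul_coordAt_quadratic_mem_localIdeal A)
  · exact Ideal.mul_mem_left _ _ (Ideal.mul_mem_left _ _ (eq_mem_localIdeal hj))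
  · rw [mul_comm]
    exact h.C_mul_mul_sq_mem_localIdeal hj

theorem sq_mul_mul_mem_localIdeal_of_eval_eq_zero {p q : RPoly N} (hp : eval z p = 0)
    (hq : eval z q = 0) : e ^ 2 * (p * q) ∈ localIdeal Es ge Is gi e z := by
  obtain ⟨b, hb⟩ := exists_eq_C_add_dotProduct_coordAt p z
  obtain ⟨b', hb'⟩ := exists_eq_C_add_dotProduct_coordAt q z
  rw [hp, C_0, zero_add, dotProduct_comm] at hb
  rw [hq, C_0, zero_add] at hb'
  have hpq : p * q = coordAt z ⬝ᵥ vecMulVec b b' *ᵥ coordAt z := by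
    rw [vecMulVec_mulVec, ← hb', op_smul_eq_smul, dotProduct_smul, ← hb, smul_eq_mul, mul_comm]
  rw [hpq]
  exact sq_mul_coordAt_quadratic_mem_localIdeal _

end LocalIdeals

section SecondOrderStates

open Matrix

variable {N : ℕ} {ι κ : Type*} {Es : Finset ι} {ge : ι → RPoly N} {Is : Finset κ}
  {gi : κ → RPoly N} {F e u : RPoly N} {z : Fin N → ℝ} {lamE : ι → ℝ} {lamI : κ → ℝ}
  {J : Ideal (RPoly N)} {φ : RPoly N →ₗ[ℝ] ℝ}

/-- The matrix of the second-order moments at `z` of a functional `φ`, localized by `e`. -/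
noncomputable def secondMoments (φ : RPoly N →ₗ[ℝ] ℝ) (e : RPoly N) (z : Fin N → ℝ) :
    Matrix (Fin N) (Fin N) ℝ :=
  of fun k l => φ (e * coordAt z k * (e * coordAt z l))

namespace IsPureState

theorem map_eq_of_mem (h : IsPureState (certCone Es ge Is gi) J u (aeval z) φ) {j : ι} (hj : j ∈ Es)
    (hJ : ge j ∈ J) : φ (ge j) = 0 := by
  have h₁ := h.nonneg _ (J.mul_mem_right 1 hJ) (eq_mul_mem_certCone hj 1)
  have h₂ := h.nonneg _ (J.mul_mem_right (-1) hJ) (eq_mul_mem_certCone hj (-1))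
  rw [mul_one] at h₁
  rw [mul_neg_one, map_neg] at h₂
  linarith

theorem map_sq_mul (h : IsPureState (certCone Es ge Is gi) J u (aeval z) φ) (he : eval z e = 1)
    {v : RPoly N} (hv : v ∈ J) : φ (e ^ 2 * v) = φ v := by
  simp [h.map_mul _ v hv, aeval_eq_eval, he]

theorem posSemidef_secondMoments (h : IsPureState (certCone Es ge Is gi) J u (aeval z) φ)
    (hJ : localIdeal Es ge Is gi e z ≤ J) : (secondMoments φ e z).PosSemidef := by
  refine .of_dotProduct_mulVec_nonneg (IsHermitian.ext fun k l => ?_) fun v => ?_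
  · simp only [secondMoments, of_apply, star_trivial, mul_comm]
  · have hexp : (e * ∑ k, C (v k) * coordAt z k) ^ 2 =
        ∑ k, ∑ l, (v k * v l) • (e * coordAt z k * (e * coordAt z l)) := by
      simp only [sq, Finset.mul_sum, Finset.sum_mul, smul_eq_C_mul, C_mul]
      exact Finset.sum_comm.trans
        (Finset.sum_congr rfl fun k _ => Finset.sum_congr rfl fun l _ => by ring)
    have hmem : (e * ∑ k, C (v k) * coordAt z k) ^ 2 ∈ J := hexp ▸ sum_mem fun k _ =>
      sum_mem fun l _ =>
        Submodule.smul_of_tower_mem J _ (hJ (coordAt_mul_coordAt_mem_localIdeal k l))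
    refine (h.nonneg _ hmem (sq_mem_certCone _)).trans_eq ?_
    rw [hexp]
    simp only [map_sum, map_smul, smul_eq_mul, dotProduct, mulVec, secondMoments, of_apply,
      Finset.mul_sum, star_trivial]
    exact Finset.sum_congr rfl fun k _ => Finset.sum_congr rfl fun l _ => by ring

theorem map_sq_mul_quadratic (h : IsPureState (certCone Es ge Is gi) J u (aeval z) φ)
    (hJ : localIdeal Es ge Is gi e z ≤ J) (A : Matrix (Fin N) (Fin N) (RPoly N)) :
    φ (e ^ 2 * (coordAt z ⬝ᵥ A *ᵥ coordAt z)) =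
      (A.map (eval z) * secondMoments φ e z).trace := by
  have hexp : e ^ 2 * (coordAt z ⬝ᵥ A *ᵥ coordAt z) =
      ∑ k, ∑ l, A k l * (e * coordAt z l * (e * coordAt z k)) := by
    simp only [dotProduct, mulVec, Finset.mul_sum]
    exact Finset.sum_congr rfl fun k _ => Finset.sum_congr rfl fun l _ => by ring
  rw [hexp]
  simp only [map_sum, h.map_mul _ _ (hJ (coordAt_mul_coordAt_mem_localIdeal _ _)), aeval_eq_eval,
    trace, diag_apply, Matrix.mul_apply, map_apply, secondMoments, of_apply]

-- `φ` kills `coordAt z k * (e ^ 2 * p)`, because the coordinate vanishes at `z`.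
theorem secondMoments_mulVec_gradP (h : IsPureState (certCone Es ge Is gi) J u (aeval z) φ)
    (hJ : localIdeal Es ge Is gi e z ≤ J) {p : RPoly N} (hp : eval z p = 0)
    (hpJ : e ^ 2 * p ∈ J) : secondMoments φ e z *ᵥ gradP p z = 0 := by
  obtain ⟨b, hb, hgrad⟩ := exists_taylor_one p z
  rw [hp, C_0, zero_add] at hb
  ext k
  have hexp : coordAt z k * (e ^ 2 * p) = ∑ l, b l * (e * coordAt z k * (e * coordAt z l)) := by
    conv_lhs => rw [hb]
    simp only [dotProduct, Finset.mul_sum]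
    exact Finset.sum_congr rfl fun l _ => by ring
  have hzero : φ (coordAt z k * (e ^ 2 * p)) = 0 := by
    rw [h.map_mul _ _ hpJ, aeval_eq_eval, eval_coordAt, sub_self, zero_mul]
  rw [hexp, map_sum] at hzero
  simp only [h.map_mul _ _ (hJ (coordAt_mul_coordAt_mem_localIdeal _ _)), aeval_eq_eval, hgrad]
    at hzero
  simpa [mulVec, dotProduct, secondMoments, mul_comm] using hzero

theorem map_nonneg_of_mem_activeSet (h : IsPureState (certCone Es ge Is gi) J u (aeval z) φ)
    (hJ : localIdeal Es ge Is gi e z ≤ J) {j : κ} (hj : j ∈ activeSet Is gi z) :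
    0 ≤ φ (gi j * e ^ 2) :=
  h.nonneg _ (hJ (active_mul_sq_mem_localIdeal hj)) (active_mul_sq_mem_certCone hj)

theorem isTangentVector_of_forall_secondMoments
    (h : IsPureState (certCone Es ge Is gi) J u (aeval z) φ) (hJ : localIdeal Es ge Is gi e z ≤ J)
    (hz : z ∈ feasibleSet Es ge Is gi) {v : Fin N → ℝ}
    (hv : ∀ g, secondMoments φ e z *ᵥ g = 0 → v ⬝ᵥ g = 0) : IsTangentVector Es ge Is gi z v := by
  refine ⟨fun j hj => hv _ ?_, fun j hj hj0 => hv _ ?_⟩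
  · exact h.secondMoments_mulVec_gradP hJ (hz.1 j hj)
      (Ideal.mul_mem_left _ _ (hJ (eq_mem_localIdeal hj)))
  · refine h.secondMoments_mulVec_gradP hJ hj0 ?_
    rw [mul_comm]
    exact hJ (active_mul_sq_mem_localIdeal (Finset.mem_filter.2 ⟨hj, hj0⟩))

theorem map_eq_sum_add_trace (h : IsPureState (certCone Es ge Is gi) J u (aeval z) φ)
    (hJ : localIdeal Es ge Is gi e z ≤ J) (he : eval z e = 1)
    (hkkt : StrictKKT Es ge Is gi F z lamE lamI) (hFJ : F ∈ J)
    {A : Matrix (Fin N) (Fin N) (RPoly N)}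
    (hF : F = ∑ j ∈ Es, C (lamE j) * ge j + ∑ j ∈ Is, C (lamI j) * gi j +
      coordAt z ⬝ᵥ A *ᵥ coordAt z) :
    φ F = ∑ j ∈ activeSet Is gi z, lamI j * φ (gi j * e ^ 2) +
      (A.map (eval z) * secondMoments φ e z).trace := by
  rw [← h.map_sq_mul he hFJ]
  conv_lhs => rw [hF]
  rw [mul_add, mul_add, map_add, map_add, h.map_sq_mul_quadratic hJ, Finset.mul_sum, Finset.mul_sum,
    map_sum, map_sum]
  have heq (j : ι) (hj : j ∈ Es) : φ (e ^ 2 * (C (lamE j) * ge j)) = 0 := by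
    have hjJ : ge j ∈ J := hJ (eq_mem_localIdeal hj)
    rw [← mul_assoc, h.map_mul _ _ hjJ, h.map_eq_of_mem hj hjJ, mul_zero]
  have hin (j : κ) : φ (e ^ 2 * (C (lamI j) * gi j)) = lamI j * φ (gi j * e ^ 2) := by
    rw [show e ^ 2 * (C (lamI j) * gi j) = lamI j • (gi j * e ^ 2) by rw [smul_eq_C_mul]; ring,
      map_smul, smul_eq_mul]
  rw [Finset.sum_eq_zero heq, zero_add, activeSet, Finset.sum_filter]
  congr 1
  refine Finset.sum_congr rfl fun j hj => ?_
  rw [hin]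
  split_ifs with hj0
  · rfl
  · rw [hkkt.multiplier_eq_zero hj hj0, zero_mul]

-- Both parts of `φ F` are nonnegative, so both vanish; strict complementarity and the second-order
-- condition then leave no room for `φ`.
theorem map_eq_zero_of_mem_localIdeal (h : IsPureState (certCone Es ge Is gi) J u (aeval z) φ)
    (hJ : localIdeal Es ge Is gi e z ≤ J) (he : eval z e = 1)
    (hkkt : StrictKKT Es ge Is gi F z lamE lamI) (hz : z ∈ zeroSet Es ge Is gi F) (hFJ : F ∈ J)
    (hφF : φ F ≤ 0) {v : RPoly N} (hv : v ∈ localIdeal Es ge Is gi e z) : φ v = 0 := by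
  obtain ⟨A, hF, hA⟩ := hkkt.exists_expansion hz.1 hz.2
  rw [h.map_eq_sum_add_trace hJ he hkkt hFJ hF] at hφF
  have hactive (j) (hj : j ∈ activeSet Is gi z) : 0 < lamI j :=
    hkkt.multiplier_pos (Finset.mem_filter.1 hj).1 (Finset.mem_filter.1 hj).2
  have hterm (j) (hj : j ∈ activeSet Is gi z) : 0 ≤ lamI j * φ (gi j * e ^ 2) :=
    mul_nonneg (hactive j hj).le (h.map_nonneg_of_mem_activeSet hJ hj)
  have hmoments : secondMoments φ e z = 0 := by
    by_contra h0
    have htrace := trace_mul_pos_of_posSemidef (h.posSemidef_secondMoments hJ) h0 fun v hv0 hv =>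
      hA v hv0 (h.isTangentVector_of_forall_secondMoments hJ hz.1 hv)
    linarith [Finset.sum_nonneg hterm]
  rw [hmoments, mul_zero, trace_zero, add_zero] at hφF
  have hsum := (Finset.sum_eq_zero_iff_of_nonneg hterm).1
    (hφF.antisymm (Finset.sum_nonneg hterm))
  induction hv using Submodule.span_induction with
  | mem q hq =>
    obtain ⟨j, hj, rfl⟩ | ⟨j, hj, rfl⟩ | ⟨k, l, rfl⟩ := hq
    · exact h.map_eq_of_mem hj (hJ (eq_mem_localIdeal hj))
    · exact (mul_eq_zero.1 (hsum j hj)).resolve_left (hactive j hj).ne'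
    · exact congrFun₂ hmoments k l
  | zero => exact map_zero φ
  | add p q _ _ hp hq => rw [map_add, hp, hq, add_zero]
  | smul a q hq hφq => rw [smul_eq_mul, h.map_mul a q (hJ hq), hφq, mul_zero]

end IsPureState

end SecondOrderStates

section Interpolation

variable {N : ℕ} {t : Finset (Fin N → ℝ)} {e : (Fin N → ℝ) → RPoly N}

/-- Polynomials `e z` that sum to one and are, for `z ∈ t`, the Lagrange interpolation polynomials
of the points of `t`. -/
structure IsLagrangePartition (t : Finset (Fin N → ℝ)) (e : (Fin N → ℝ) → RPoly N) : Prop where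
  eval_of_ne : ∀ z ∈ t, ∀ z' ∈ t, z' ≠ z → eval z' (e z) = 0
  sum_eq_one : ∑ z ∈ t, e z = 1

theorem ker_eval_sup_ker_eval {z z' : Fin N → ℝ} (hne : z ≠ z') :
    RingHom.ker (eval z) ⊔ RingHom.ker (eval z') = ⊤ := by
  have hmax (x : Fin N → ℝ) : (RingHom.ker (eval x)).IsMaximal :=
    RingHom.ker_isMaximal_of_surjective _ fun r => ⟨C r, eval_C r⟩
  refine Ideal.IsMaximal.coprime_of_ne (hmax z) (hmax z') fun hker => hne (funext fun i => ?_)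
  have hi : X i - C (z i) ∈ RingHom.ker (eval z') := hker ▸ by simp [RingHom.mem_ker]
  simpa [RingHom.mem_ker, sub_eq_zero, eq_comm] using hi

theorem exists_isLagrangePartition (ht : t.Nonempty) : ∃ e, IsLagrangePartition t e := by
  have htop := (Ideal.iSup_iInf_eq_top_iff_pairwise ht fun z => RingHom.ker (eval z)).2
    fun _ _ _ _ => ker_eval_sup_ker_eval
  rw [Ideal.eq_top_iff_one, Submodule.mem_iSup_finset_iff_exists_sum] at htop
  obtain ⟨e, he⟩ := htop
  refine ⟨fun z => e z, fun z _ z' hz' hne => ?_, he⟩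
  have hmem := (e z).2
  simp only [Submodule.mem_iInf] at hmem
  exact hmem z' hz' hne

namespace IsLagrangePartition

theorem eval_self (h : IsLagrangePartition t e) {z : Fin N → ℝ} (hz : z ∈ t) :
    eval z (e z) = 1 := by
  have hsum := congrArg (eval z) h.sum_eq_one
  rwa [map_sum, map_one, Finset.sum_eq_single_of_mem z hz
    fun z' hz' hne => h.eval_of_ne z' hz' z hz hne.symm] at hsum

theorem exists_eval_ne_zero (h : IsLagrangePartition t e) (x : Fin N → ℝ) :
    ∃ z ∈ t, eval x (e z) ≠ 0 := by
  have hsum := congrArg (eval x) h.sum_eq_one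
  rw [map_sum, map_one] at hsum
  exact Finset.exists_ne_zero_of_sum_ne_zero (hsum.trans_ne one_ne_zero)

theorem exists_sum_mul_sq_eq_one (h : IsLagrangePartition t e) :
    ∃ b : (Fin N → ℝ) → RPoly N, ∑ z ∈ t, b z * e z ^ 2 = 1 := by
  have hspan : Ideal.span (e '' t) = ⊤ := by
    rw [Ideal.eq_top_iff_one, ← h.sum_eq_one]
    exact sum_mem fun z hz => Ideal.subset_span ⟨z, hz, rfl⟩
  have hsq := Ideal.span_pow_eq_top _ hspan 2
  rw [← Set.image_comp, Ideal.eq_top_iff_one] at hsq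
  obtain ⟨b, hb⟩ := (Submodule.mem_span_image_finset_iff_exists_fun' (R := RPoly N)).1 hsq
  exact ⟨b, by simpa using hb⟩

end IsLagrangePartition

end Interpolation

section FiniteZeros

variable {N : ℕ} {ι κ : Type*} {Es : Finset ι} {ge : ι → RPoly N} {Is : Finset κ}
  {gi : κ → RPoly N} {F : RPoly N} {t : Finset (Fin N → ℝ)} {e : (Fin N → ℝ) → RPoly N}
  {φ : RPoly N →ₗ[ℝ] ℝ} {x z : Fin N → ℝ}

/-- The sum of the local ideals at the points of `t`. -/
noncomputable def zeroIdeal (Es : Finset ι) (ge : ι → RPoly N) (Is : Finset κ) (gi : κ → RPoly N)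
    (t : Finset (Fin N → ℝ)) (e : (Fin N → ℝ) → RPoly N) : Ideal (RPoly N) :=
  ⨆ z ∈ t, localIdeal Es ge Is gi (e z) z

/-- The order unit of `zeroIdeal`. -/
noncomputable def zeroUnit (Is : Finset κ) (gi : κ → RPoly N) (t : Finset (Fin N → ℝ))
    (e : (Fin N → ℝ) → RPoly N) : RPoly N :=
  ∑ z ∈ t, localUnit Is gi (e z) z

theorem localIdeal_le_zeroIdeal (hz : z ∈ t) :
    localIdeal Es ge Is gi (e z) z ≤ zeroIdeal Es ge Is gi t e :=
  le_iSup₂_of_le z hz le_rfl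

theorem zeroUnit_mem_zeroIdeal : zeroUnit Is gi t e ∈ zeroIdeal Es ge Is gi t e :=
  sum_mem fun _ hz => localIdeal_le_zeroIdeal hz localUnit_mem_localIdeal

theorem zeroUnit_mem_certCone : zeroUnit Is gi t e ∈ certCone Es ge Is gi :=
  sum_mem fun _ _ => localUnit_mem_certCone

theorem HasBoundedMultipliers.zeroIdeal_le_dominatedIdeal
    (hB : HasBoundedMultipliers (certCone Es ge Is gi)) :
    zeroIdeal Es ge Is gi t e ≤ dominatedIdeal (certCone Es ge Is gi) (zeroUnit Is gi t e) :=
  iSup₂_le fun _ hz =>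
    hB.localIdeal_le_dominatedIdeal (sum_sub_mem (fun _ _ => localUnit_mem_certCone) hz)

namespace IsLagrangePartition

theorem mem_zeroIdeal (he : IsLagrangePartition t e) (ht : ∀ z ∈ t, z ∈ zeroSet Es ge Is gi F)
    (hkkt : ∀ z ∈ t, ∃ lamE lamI, StrictKKT Es ge Is gi F z lamE lamI) :
    F ∈ zeroIdeal Es ge Is gi t e := by
  obtain ⟨b, hb⟩ := he.exists_sum_mul_sq_eq_one
  rw [← one_mul F, ← hb, Finset.sum_mul]
  refine sum_mem fun z hz => ?_
  obtain ⟨lamE, lamI, h⟩ := hkkt z hz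
  rw [mul_assoc]
  exact Ideal.mul_mem_left _ _ (localIdeal_le_zeroIdeal hz (h.sq_mul_mem_localIdeal (ht z hz)))

-- If the unit vanished at `x`, so would the whole ideal, in particular the squared coordinates
-- at any `z ∈ t` with `e z` nonzero at `x`; this forces `x = z`.
theorem eval_zeroUnit_ne_zero (he : IsLagrangePartition t e)
    (h : IsPureState (certCone Es ge Is gi) (zeroIdeal Es ge Is gi t e) (zeroUnit Is gi t e)
      (aeval x) φ) (hx : x ∉ t) : eval x (zeroUnit Is gi t e) ≠ 0 := by
  intro hu
  obtain ⟨z, hz, hez⟩ := he.exists_eval_ne_zero x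
  have hxz : x = z := funext fun k => by
    have hk := h.character_unit_mul zeroUnit_mem_zeroIdeal
      (localIdeal_le_zeroIdeal hz (coordAt_mul_coordAt_mem_localIdeal k k))
    simpa [aeval_eq_eval, hu, eval_coordAt, hez, sub_eq_zero] using hk.symm
  exact hx (hxz ▸ hz)

theorem map_localUnit_eq_zero_of_ne (he : IsLagrangePartition t e)
    (h : IsPureState (certCone Es ge Is gi) (zeroIdeal Es ge Is gi t e) (zeroUnit Is gi t e)
      (aeval x) φ) (hx : x ∈ t) (hφ : ∀ v ∈ localIdeal Es ge Is gi (e x) x, φ v = 0)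
    (hz : z ∈ t) (hne : x ≠ z) : φ (localUnit Is gi (e z) z) = 0 := by
  have hfactor : localUnit Is gi (e z) z =
      e z * (e z * (∑ k, coordAt z k ^ 2 + ∑ j ∈ activeSet Is gi z, gi j)) := by
    rw [localUnit, ← Finset.sum_mul]
    simp only [mul_pow, ← Finset.mul_sum]
    ring
  have hzero : eval x (e z) = 0 := he.eval_of_ne z hz x hx hne
  rw [← h.map_sq_mul (he.eval_self hx) (localIdeal_le_zeroIdeal hz localUnit_mem_localIdeal),
    hfactor]
  exact hφ _ (sq_mul_mul_mem_localIdeal_of_eval_eq_zero hzero (by rw [map_mul, hzero, zero_mul]))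

theorem map_zeroUnit_eq_zero (he : IsLagrangePartition t e)
    (h : IsPureState (certCone Es ge Is gi) (zeroIdeal Es ge Is gi t e) (zeroUnit Is gi t e)
      (aeval x) φ) (hx : x ∈ t) (hφ : ∀ v ∈ localIdeal Es ge Is gi (e x) x, φ v = 0) :
    φ (zeroUnit Is gi t e) = 0 := by
  rw [zeroUnit, map_sum]
  refine Finset.sum_eq_zero fun z hz => ?_
  obtain rfl | hne := eq_or_ne x z
  · exact hφ _ localUnit_mem_localIdeal
  · exact he.map_localUnit_eq_zero_of_ne h hx hφ hz hne

end IsLagrangePartition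

theorem IsPureState.mem_feasibleSet_and_eval_nonpos {J : Ideal (RPoly N)} {u : RPoly N}
    (h : IsPureState (certCone Es ge Is gi) J u (aeval x) φ) (huJ : u ∈ J) (hux : eval x u ≠ 0)
    (hFJ : F ∈ J) (hφF : φ F ≤ 0) : x ∈ feasibleSet Es ge Is gi ∧ eval x F ≤ 0 := by
  rw [← aeval_eq_eval] at hux ⊢
  refine ⟨mem_feasibleSet_iff_forall_certCone.2 fun p hp =>
    h.character_nonneg isQuadraticModule_certCone huJ hux hp, ?_⟩
  rw [← h.character_unit_mul huJ hFJ]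
  exact mul_nonpos_of_nonneg_of_nonpos
    (h.character_unit_nonneg isQuadraticModule_certCone huJ) hφF

theorem HasBoundedMultipliers.mem_certCone_of_strictKKT
    (hB : HasBoundedMultipliers (certCone Es ge Is gi))
    (hF : ∀ x ∈ feasibleSet Es ge Is gi, 0 ≤ eval x F)
    (hkkt : ∀ z ∈ zeroSet Es ge Is gi F, ∃ lamE lamI, StrictKKT Es ge Is gi F z lamE lamI) :
    F ∈ certCone Es ge Is gi := by
  obtain ⟨t, ht⟩ := (finite_zeroSet hB.isCompact_feasibleSet hkkt).exists_finset
  obtain rfl | hne := t.eq_empty_or_nonempty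
  · refine hB.mem_certCone_of_pos fun x hx => (hF x hx).lt_of_ne' fun h0 => ?_
    exact Finset.notMem_empty x ((ht x).2 ⟨hx, h0⟩)
  by_contra hFM
  obtain ⟨e, he⟩ := exists_isLagrangePartition hne
  have hFJ : F ∈ zeroIdeal Es ge Is gi t e :=
    he.mem_zeroIdeal (fun z => (ht z).1) fun z hz => hkkt z ((ht z).1 hz)
  obtain ⟨χ, φ, h, hφF⟩ := hB.exists_isPureState zeroUnit_mem_certCone zeroUnit_mem_zeroIdeal
    hB.zeroIdeal_le_dominatedIdeal hFJ hFM
  obtain ⟨x, rfl⟩ : ∃ x, χ = aeval x := ⟨_, aeval_unique χ⟩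
  by_cases hx : x ∈ t
  · obtain ⟨lamE, lamI, hxkkt⟩ := hkkt x ((ht x).1 hx)
    have hφ (v) (hv : v ∈ localIdeal Es ge Is gi (e x) x) : φ v = 0 :=
      h.map_eq_zero_of_mem_localIdeal (localIdeal_le_zeroIdeal hx) (he.eval_self hx) hxkkt
        ((ht x).1 hx) hFJ hφF hv
    exact one_ne_zero (h.map_unit.symm.trans (he.map_zeroUnit_eq_zero h hx hφ))
  · obtain ⟨hxK, hxF⟩ := h.mem_feasibleSet_and_eval_nonpos zeroUnit_mem_zeroIdeal
      (he.eval_zeroUnit_ne_zero h hx) hFJ hφF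
    exact hx ((ht x).2 ⟨hxK, hxF.antisymm (hF x hxK)⟩)

end FiniteZeros

section Homogenization

variable {n : ℕ} {E I : Finset ℕ} {c : ℕ → RPoly n} {f : RPoly n} {γ : ℝ}

theorem mdeg_le_totalDegree {p : RPoly n} {α : Fin n →₀ ℕ} (hα : α ∈ p.support) :
    mdeg α ≤ p.totalDegree :=
  (Finsupp.sum_fintype α (fun _ => id) fun _ => rfl).symm.trans_le (le_totalDegree hα)

theorem eval_homogAux (ℓ : ℕ) (p : RPoly n) (u : Fin (n + 1) → ℝ) :
    eval u (homogAux ℓ p) =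
      ∑ α ∈ p.support, p.coeff α * (u 0 ^ (ℓ - mdeg α) * ∏ i, u (Fin.succ i) ^ α i) := by
  rw [homogAux, map_sum]
  refine Finset.sum_congr rfl fun α _ => ?_
  rw [eval_monomial, Finsupp.prod_add_index' (by simp) (by intros; rw [pow_add]),
    Finsupp.prod_single_index (by simp), Finsupp.prod_mapDomain_index (by simp)
    (by intros; rw [pow_add]), Finsupp.prod_fintype _ _ (by simp)]

theorem eval_smul_homogenize (p : RPoly n) (t : ℝ) (u : Fin (n + 1) → ℝ) :
    eval (t • u) (homogenize p) = t ^ p.totalDegree * eval u (homogenize p) := by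
  rw [homogenize, eval_homogAux, eval_homogAux, Finset.mul_sum]
  refine Finset.sum_congr rfl fun α hα => ?_
  simp only [Pi.smul_apply, smul_eq_mul, mul_pow, Finset.prod_mul_distrib,
    Finset.prod_pow_eq_pow_sum]
  rw [← Nat.sub_add_cancel (mdeg_le_totalDegree hα), pow_add, Nat.add_sub_cancel, mdeg]
  ring

theorem eval_cons_one_homogenize (p : RPoly n) (x : Fin n → ℝ) :
    eval (Fin.cons 1 x : Fin (n + 1) → ℝ) (homogenize p) = eval x p := by
  rw [homogenize, eval_homogAux, eval_eq']
  exact Finset.sum_congr rfl fun α _ => by simp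

theorem smul_cons_one_eq_self {u : Fin (n + 1) → ℝ} (h : u 0 ≠ 0) :
    u 0 • (Fin.cons 1 ((u 0)⁻¹ • Fin.tail u) : Fin (n + 1) → ℝ) = u :=
  funext <| Fin.cases (by simp) fun i => by simp [Fin.tail, h]

/-- The objective `f̃ - γ x₀ ^ d` of the homogenized problem, where `d` is the degree of `f`. -/
noncomputable def homogObjective (f : RPoly n) (γ : ℝ) : RPoly (n + 1) :=
  homogenize f - C γ * X 0 ^ f.totalDegree

theorem eval_smul_homogObjective (t : ℝ) (u : Fin (n + 1) → ℝ) :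
    eval (t • u) (homogObjective f γ) = t ^ f.totalDegree * eval u (homogObjective f γ) := by
  simp only [homogObjective, map_sub, map_mul, map_pow, eval_C, eval_X, eval_smul_homogenize,
    Pi.smul_apply, smul_eq_mul]
  ring

theorem eval_cons_one_homogObjective (x : Fin n → ℝ) :
    eval (Fin.cons 1 x : Fin (n + 1) → ℝ) (homogObjective f γ) = eval x f - γ := by
  simp [homogObjective, eval_cons_one_homogenize]

/-- The feasible set of the homogenized problem: `K̃` without the constraint `x₀ ≥ 0`. -/
def sphereSet (E I : Finset ℕ) (c : ℕ → RPoly n) : Set (Fin (n + 1) → ℝ) :=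
  feasibleSet (OS E) (gEqH c) I fun j => homogenize (c j)

theorem mem_sphereSet {u : Fin (n + 1) → ℝ} : u ∈ sphereSet E I c ↔
    (∀ j ∈ E, eval u (homogenize (c j)) = 0) ∧ (∀ j ∈ I, 0 ≤ eval u (homogenize (c j))) ∧
      ∑ i, u i ^ 2 = 1 := by
  simp only [sphereSet, feasibleSet, Set.mem_ofPred_eq, OS, Finset.mem_insert, Finset.mem_image,
    forall_eq_or_imp, forall_exists_index, and_imp, forall_apply_eq_imp_iff₂, gEqH, Option.elim,
    sphereP, map_sub, map_sum, map_pow, eval_X, map_one, sub_eq_zero]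
  tauto

theorem mem_Kset_of_smul_cons_one_mem_sphereSet {x : Fin n → ℝ} {t : ℝ} (ht : 0 < t)
    (h : t • (Fin.cons 1 x : Fin (n + 1) → ℝ) ∈ sphereSet E I c) : x ∈ Kset E I c := by
  obtain ⟨heq, hin, -⟩ := mem_sphereSet.1 h
  simp only [eval_smul_homogenize, eval_cons_one_homogenize] at heq hin
  exact ⟨fun j hj => (mul_eq_zero.1 (heq j hj)).resolve_left (pow_pos ht _).ne',
    fun j hj => nonneg_of_mul_nonneg_right (hin j hj) (pow_pos ht _)⟩

theorem neg_mem_sphereSet (hce : ∀ j ∈ I, Even (c j).totalDegree) {u : Fin (n + 1) → ℝ}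
    (hu : u ∈ sphereSet E I c) : -u ∈ sphereSet E I c := by
  obtain ⟨heq, hin, hsphere⟩ := mem_sphereSet.1 hu
  rw [← neg_one_smul ℝ u, mem_sphereSet]
  refine ⟨fun j hj => ?_, fun j hj => ?_, by simpa using hsphere⟩
  · rw [eval_smul_homogenize, heq j hj, mul_zero]
  · rw [eval_smul_homogenize, (hce j hj).neg_one_pow, one_mul]
    exact hin j hj

theorem mem_Khom {u : Fin (n + 1) → ℝ} : u ∈ Khom E I c ↔ u ∈ sphereSet E I c ∧ 0 ≤ u 0 := by
  simp only [mem_sphereSet, Khom, Set.mem_ofPred_eq, and_assoc]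

theorem ClosedAtInfinity.eval_homogObjective_nonneg (hcl : ClosedAtInfinity E I c)
    (hγ : ∀ x ∈ Kset E I c, γ ≤ eval x f) {u : Fin (n + 1) → ℝ} (hu : u ∈ Khom E I c) :
    0 ≤ eval u (homogObjective f γ) := by
  rw [hcl] at hu
  refine closure_minimal (t := {u | 0 ≤ eval u (homogObjective f γ)}) ?_
    (isClosed_le continuous_const (continuous_eval _)) hu
  rintro v ⟨hv, hv0 : 0 < v 0⟩
  rw [mem_Khom, ← smul_cons_one_eq_self hv0.ne'] at hv
  rw [Set.mem_ofPred_eq, ← smul_cons_one_eq_self hv0.ne', eval_smul_homogObjective,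
    eval_cons_one_homogObjective]
  exact mul_nonneg (pow_pos hv0 _).le
    (sub_nonneg.2 (hγ _ (mem_Kset_of_smul_cons_one_mem_sphereSet hv0 hv.1)))

theorem ClosedAtInfinity.eval_homogObjective_nonneg_of_mem_sphereSet
    (hcl : ClosedAtInfinity E I c) (hfe : Even f.totalDegree)
    (hce : ∀ j ∈ I, Even (c j).totalDegree) (hγ : ∀ x ∈ Kset E I c, γ ≤ eval x f)
    {u : Fin (n + 1) → ℝ} (hu : u ∈ sphereSet E I c) : 0 ≤ eval u (homogObjective f γ) := by
  obtain h0 | h0 := le_total 0 (u 0)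
  · exact hcl.eval_homogObjective_nonneg hγ (mem_Khom.2 ⟨hu, h0⟩)
  · have hneg := hcl.eval_homogObjective_nonneg hγ
      (mem_Khom.2 ⟨neg_mem_sphereSet hce hu, neg_nonneg.2 h0⟩)
    rwa [← neg_one_smul ℝ u, eval_smul_homogObjective, hfe.neg_one_pow, one_mul] at hneg

theorem ClosedAtInfinity.homogObjective_mem_certCone (hcl : ClosedAtInfinity E I c)
    (hfe : Even f.totalDegree) (hce : ∀ j ∈ I, Even (c j).totalDegree)
    (hγ : ∀ x ∈ Kset E I c, γ ≤ eval x f)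
    (hkkt : ∀ u ∈ sphereSet E I c,
      IsMinOn (fun x => eval x (homogObjective f γ)) (sphereSet E I c) u →
      ∃ lamE lamI, StrictKKT (OS E) (gEqH c) I (fun j => homogenize (c j)) (homogObjective f γ) u
        lamE lamI) :
    homogObjective f γ ∈ certCone (OS E) (gEqH c) I fun j => homogenize (c j) := by
  have hnonneg {u} (hu : u ∈ sphereSet E I c) :=
    hcl.eval_homogObjective_nonneg_of_mem_sphereSet hfe hce hγ hu
  refine (hasBoundedMultipliers_certCone_of_sphere (Finset.mem_insert_self none _)
    rfl).mem_certCone_of_strictKKT (fun u hu => hnonneg hu) fun u hu => hkkt u hu.1 fun x hx => ?_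
  exact hu.2.trans_le (hnonneg hx)

end Homogenization

section TruncatedCertificates

variable {n : ℕ} {E I : Finset ℕ} {c : ℕ → RPoly n} {k : ℕ} {p q : RPoly n}

theorem isSOS_iff_isSumSq : IsSOS p ↔ IsSumSq p := by
  constructor
  · rintro ⟨L, rfl⟩
    induction L with
    | nil => exact IsSumSq.zero
    | cons a L ih => simpa [sq] using IsSumSq.sq_add a ih
  · intro h
    induction h with
    | zero => exact ⟨[], rfl⟩
    | sq_add a _ ih =>
      obtain ⟨L, rfl⟩ := ih
      exact ⟨a :: L, by simp [sq]⟩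

namespace IsSOS

theorem zero : IsSOS (0 : RPoly n) :=
  isSOS_iff_isSumSq.2 .zero

theorem add (hp : IsSOS p) (hq : IsSOS q) : IsSOS (p + q) :=
  isSOS_iff_isSumSq.2 ((isSOS_iff_isSumSq.1 hp).add (isSOS_iff_isSumSq.1 hq))

theorem smul {r : ℝ} (hr : 0 ≤ r) (hp : IsSOS p) : IsSOS (r • p) := by
  have hC : IsSumSq (C r : RPoly n) := IsSquare.isSumSq ((Real.isSquare_iff.2 hr).map C)
  rw [smul_eq_C_mul]
  exact isSOS_iff_isSumSq.2 (hC.mul (isSOS_iff_isSumSq.1 hp))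

theorem eval_nonneg (hp : IsSOS p) (x : Fin n → ℝ) : 0 ≤ eval x p := by
  obtain ⟨L, rfl⟩ := hp
  rw [map_list_sum]
  refine List.sum_nonneg ?_
  simp [sq_nonneg]

end IsSOS

/-- The truncated cone `Ideal(c_eq)_k + QM(c_in)_k`. It is empty if some constraint has degree
greater than `k`. -/
def truncCert (E I : Finset ℕ) (c : ℕ → RPoly n) (k : ℕ) : Set (RPoly n) :=
  {p | ∃ p₁ ∈ IdealDeg E c k, ∃ p₂ ∈ QModDeg I c k, p = p₁ + p₂}

theorem eval_nonneg_of_mem_truncCert (hp : p ∈ truncCert E I c k) {x : Fin n → ℝ}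
    (hx : x ∈ Kset E I c) : 0 ≤ eval x p := by
  obtain ⟨_, ⟨q, -, rfl⟩, _, ⟨σ₀, σ, hσ₀, -, hσ, rfl⟩, rfl⟩ := hp
  have hideal : ∑ j ∈ E, eval x (c j) * eval x (q j) = 0 :=
    Finset.sum_eq_zero fun j hj => by rw [hx.1 j hj, zero_mul]
  simp only [map_add, map_sum, map_mul, hideal, zero_add]
  exact add_nonneg (hσ₀.eval_nonneg x) (Finset.sum_nonneg fun j hj =>
    mul_nonneg (hx.2 j hj) ((hσ j hj).1.eval_nonneg x))

theorem totalDegree_add_add_le {a b : RPoly n} {l : ℕ} (ha : a.totalDegree + l ≤ k)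
    (hb : b.totalDegree + l ≤ k) : (a + b).totalDegree + l ≤ k := by
  have := totalDegree_add a b
  omega

theorem add_mem_truncCert (hp : p ∈ truncCert E I c k) (hq : q ∈ truncCert E I c k) :
    p + q ∈ truncCert E I c k := by
  obtain ⟨_, ⟨a, ha, rfl⟩, _, ⟨σ₀, σ, hσ₀, hσ₀k, hσ, rfl⟩, rfl⟩ := hp
  obtain ⟨_, ⟨b, hb, rfl⟩, _, ⟨τ₀, τ, hτ₀, hτ₀k, hτ, rfl⟩, rfl⟩ := hq
  refine ⟨_, ⟨fun j => a j + b j, fun j hj => totalDegree_add_add_le (ha j hj) (hb j hj), rfl⟩, _,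
    ⟨σ₀ + τ₀, fun j => σ j + τ j, hσ₀.add hτ₀, (totalDegree_add _ _).trans (max_le hσ₀k hτ₀k),
      fun j hj => ⟨(hσ j hj).1.add (hτ j hj).1, totalDegree_add_add_le (hσ j hj).2 (hτ j hj).2⟩,
      rfl⟩, ?_⟩
  simp only [mul_add, Finset.sum_add_distrib]
  ring

theorem smul_mem_truncCert {r : ℝ} (hr : 0 ≤ r) (hp : p ∈ truncCert E I c k) :
    r • p ∈ truncCert E I c k := by
  obtain ⟨_, ⟨a, ha, rfl⟩, _, ⟨σ₀, σ, hσ₀, hσ₀k, hσ, rfl⟩, rfl⟩ := hp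
  refine ⟨_, ⟨fun j => r • a j, fun j hj => ?_, rfl⟩, _,
    ⟨r • σ₀, fun j => r • σ j, hσ₀.smul hr, (totalDegree_smul_le _ _).trans hσ₀k,
      fun j hj => ⟨(hσ j hj).1.smul hr, ?_⟩, rfl⟩, ?_⟩
  · exact (Nat.add_le_add_right (totalDegree_smul_le _ _) _).trans (ha j hj)
  · exact (Nat.add_le_add_right (totalDegree_smul_le _ _) _).trans (hσ j hj).2
  · simp only [mul_smul_comm, smul_add, Finset.smul_sum]

theorem IsSOS.mem_truncCert (hc : ∀ j ∈ E ∪ I, (c j).totalDegree ≤ k) (hp : IsSOS p)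
    (hpk : p.totalDegree ≤ k) : p ∈ truncCert E I c k :=
  ⟨0, ⟨0, fun j hj => by simpa using hc j (Finset.mem_union_left _ hj), by simp⟩, p,
    ⟨p, 0, hp, hpk, fun j hj => ⟨.zero, by simpa using hc j (Finset.mem_union_right _ hj)⟩,
      by simp⟩, by simp⟩

theorem ineq_mul_mem_truncCert (hc : ∀ j ∈ E ∪ I, (c j).totalDegree ≤ k) (hp : IsSOS p) {j : ℕ}
    (hj : j ∈ I) (hpk : p.totalDegree + (c j).totalDegree ≤ k) : c j * p ∈ truncCert E I c k := by
  refine ⟨0, ⟨0, fun i hi => by simpa using hc i (Finset.mem_union_left _ hi), by simp⟩, c j * p,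
    ⟨0, Pi.single j p, .zero, by simp, fun i hi => ?_, by simp [Pi.single_apply, hj]⟩, by simp⟩
  obtain rfl | hij := eq_or_ne i j
  · simpa using ⟨hp, hpk⟩
  · simpa [hij] using ⟨IsSOS.zero, hc i (Finset.mem_union_right _ hi)⟩

theorem eq_mul_mem_truncCert (hc : ∀ j ∈ E ∪ I, (c j).totalDegree ≤ k) {j : ℕ} (hj : j ∈ E)
    (hpk : p.totalDegree + (c j).totalDegree ≤ k) : c j * p ∈ truncCert E I c k := by
  refine ⟨c j * p, ⟨Pi.single j p, fun i hi => ?_, by simp [Pi.single_apply, hj]⟩, 0,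
    ⟨0, 0, .zero, by simp,
      fun i hi => ⟨.zero, by simpa using hc i (Finset.mem_union_right _ hi)⟩, by simp⟩, by simp⟩
  obtain rfl | hij := eq_or_ne i j
  · simpa using hpk
  · simpa [hij] using hc i (Finset.mem_union_left _ hi)

end TruncatedCertificates

section Dehomogenization

open Filter

variable {n : ℕ} {E I : Finset ℕ} {c : ℕ → RPoly n} {f : RPoly n} {γ : ℝ}
  {p q : RPoly (n + 1)} {A B A' B' : RPoly n} {m : ℕ}

/-- The denominator `θ = 1 + ‖x‖²`. -/
noncomputable def theta (n : ℕ) : RPoly n :=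
  1 + ∑ i, X i ^ 2

theorem eval_theta_pos (x : Fin n → ℝ) : 0 < eval x (theta n) := by
  simp only [theta, map_add, map_one, map_sum, map_pow, eval_X]
  positivity

theorem totalDegree_theta_le : (theta n).totalDegree ≤ 2 :=
  (totalDegree_add _ _).trans <| max_le (by simp) <|
    totalDegree_finsetSum_le fun i _ => by simp

theorem totalDegree_theta_pow_mul_le (k : ℕ) (p : RPoly n) :
    (theta n ^ k * p).totalDegree ≤ 2 * k + p.totalDegree := by
  have hmul := totalDegree_mul (theta n ^ k) p
  have hpow := totalDegree_pow (theta n) k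
  have := Nat.mul_le_mul_left k (totalDegree_theta_le (n := n))
  omega

theorem isSOS_sq_add_theta_mul_sq (A B : RPoly n) : IsSOS (A ^ 2 + theta n * B ^ 2) := by
  refine ⟨A :: B :: List.ofFn fun i => X i * B, ?_⟩
  simp only [List.map_cons, List.sum_cons, List.map_ofFn, List.sum_ofFn, Function.comp_apply,
    mul_pow, ← Finset.sum_mul, theta]
  ring

theorem totalDegree_sq_add_theta_mul_sq_le (hA : A.totalDegree ≤ m) (hB : B.totalDegree < m) :
    (A ^ 2 + theta n * B ^ 2).totalDegree ≤ 2 * m := by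
  have hadd := totalDegree_add (A ^ 2) (theta n * B ^ 2)
  have hA2 := totalDegree_pow A 2
  have hB2 := totalDegree_pow B 2
  have hmul := totalDegree_theta_pow_mul_le 1 (B ^ 2)
  rw [pow_one] at hmul
  omega

/-- `A + √θ B` is the polynomial `p`, multiplied by `√θ ^ m` and restricted to the central
projections `(1, x) / √θ` of points of `ℝⁿ` to the sphere. Both signs of `√θ` are required. -/
def Dehomogenizes (m : ℕ) (p : RPoly (n + 1)) (A B : RPoly n) : Prop :=
  ∀ (x : Fin n → ℝ) (s : ℝ), s ^ 2 = eval x (theta n) →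
    s ^ m * eval (s⁻¹ • (Fin.cons 1 x : Fin (n + 1) → ℝ)) p = eval x A + s * eval x B

theorem ne_zero_of_sq_eq_eval_theta {x : Fin n → ℝ} {s : ℝ} (hs : s ^ 2 = eval x (theta n)) :
    s ≠ 0 := by
  rintro rfl
  exact (eval_theta_pos x).ne (by simpa using hs)

namespace Dehomogenizes

theorem zero : Dehomogenizes m (0 : RPoly (n + 1)) 0 0 :=
  fun x s _ => by simp

theorem add (hp : Dehomogenizes m p A B) (hq : Dehomogenizes m q A' B') :
    Dehomogenizes m (p + q) (A + A') (B + B') := fun x s hs => by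
  simp only [map_add, mul_add, hp x s hs, hq x s hs]
  ring

theorem smul (r : ℝ) (hp : Dehomogenizes m p A B) : Dehomogenizes m (r • p) (r • A) (r • B) :=
  fun x s hs => by
    simp only [smul_eval]
    linear_combination r * hp x s hs

theorem sq (hp : Dehomogenizes m p A B) :
    Dehomogenizes (2 * m) (p ^ 2) (A ^ 2 + theta n * B ^ 2) (2 * A * B) := fun x s hs => by
  rw [map_pow, mul_comm 2 m, pow_mul, ← mul_pow, hp x s hs]
  simp only [map_add, map_mul, map_pow, map_ofNat, ← hs]
  ring

theorem theta_pow_mul (k : ℕ) (hp : Dehomogenizes m p A B) :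
    Dehomogenizes (2 * k + m) p (theta n ^ k * A) (theta n ^ k * B) := fun x s hs => by
  rw [pow_add, pow_mul, hs, mul_assoc, hp x s hs]
  simp only [map_mul, map_pow]
  ring

theorem succ (hp : Dehomogenizes m p A B) : Dehomogenizes (m + 1) p (theta n * B) A :=
  fun x s hs => by
    rw [pow_succ', mul_assoc, hp x s hs, map_mul, ← hs]
    ring

theorem homogenize_mul (g : RPoly n) (hp : Dehomogenizes m p A B) :
    Dehomogenizes (g.totalDegree + m) (homogenize g * p) (g * A) (g * B) := fun x s hs => by
  have hs0 := ne_zero_of_sq_eq_eval_theta hs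
  rw [map_mul, eval_smul_homogenize, eval_cons_one_homogenize, pow_add, inv_pow, mul_mul_mul_comm,
    mul_inv_cancel_left₀ (pow_ne_zero _ hs0), hp x s hs, map_mul, map_mul]
  ring

theorem sphereP_mul (m : ℕ) (p : RPoly (n + 1)) : Dehomogenizes m (sphereP n * p) 0 0 :=
  fun x s hs => by
    have hs0 := ne_zero_of_sq_eq_eval_theta hs
    have hsphere : eval (s⁻¹ • (Fin.cons 1 x : Fin (n + 1) → ℝ)) (sphereP n) = 0 := by
      simp only [sphereP, map_sub, map_sum, map_pow, eval_X, map_one, Pi.smul_apply, smul_eq_mul,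
        mul_pow, ← Finset.mul_sum]
      rw [Fin.sum_univ_succ]
      simp only [Fin.cons_zero, Fin.cons_succ, one_pow]
      simp only [theta, map_add, map_one, map_sum, map_pow, eval_X] at hs
      rw [← hs, inv_pow, inv_mul_cancel₀ (pow_ne_zero 2 hs0), sub_self]
    simp [hsphere]

theorem homogObjective (f : RPoly n) (γ : ℝ) :
    Dehomogenizes f.totalDegree (homogObjective f γ) (f - C γ) 0 := fun x s hs => by
  have hs0 := ne_zero_of_sq_eq_eval_theta hs
  rw [eval_smul_homogObjective, eval_cons_one_homogObjective, inv_pow,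
    mul_inv_cancel_left₀ (pow_ne_zero _ hs0)]
  simp

theorem monomial (α : Fin (n + 1) →₀ ℕ) (r : ℝ) :
    Dehomogenizes (mdeg α) (MvPolynomial.monomial α r) (MvPolynomial.monomial α.tail r) 0 :=
  fun x s hs => by
    have hs0 := ne_zero_of_sq_eq_eval_theta hs
    rw [eval_monomial, eval_monomial, Finsupp.prod_fintype _ _ (by simp),
      Finsupp.prod_fintype _ _ (by simp)]
    simp only [Pi.smul_apply, smul_eq_mul, mul_pow, Finset.prod_mul_distrib,
      Finset.prod_pow_eq_pow_sum, map_zero, mul_zero, add_zero]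
    rw [mdeg, inv_pow, mul_left_comm r, mul_inv_cancel_left₀ (pow_ne_zero _ hs0),
      Fin.prod_univ_succ]
    simp [Finsupp.tail_apply]

theorem left_unique (h : Dehomogenizes m p A B) (h' : Dehomogenizes m p A' B') : A = A' := by
  refine MvPolynomial.funext fun x => ?_
  have hs : √(eval x (theta n)) ^ 2 = eval x (theta n) := Real.sq_sqrt (eval_theta_pos x).le
  have hs' : (-√(eval x (theta n))) ^ 2 = eval x (theta n) := by rw [neg_sq, hs]
  linarith [(h x _ hs).symm.trans (h' x _ hs), (h x _ hs').symm.trans (h' x _ hs')]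

end Dehomogenizes

theorem exists_dehomogenizes_monomial {α : Fin (n + 1) →₀ ℕ} (hα : mdeg α < m) (r : ℝ) :
    ∃ A B : RPoly n, A.totalDegree ≤ m ∧ B.totalDegree < m ∧
      Dehomogenizes m (monomial α r) A B := by
  have hdeg : (monomial α.tail r : RPoly n).totalDegree ≤ mdeg α := by
    refine (totalDegree_monomial_le _ _).trans ?_
    simp [Finsupp.sum_fintype, mdeg, Fin.sum_univ_succ, Finsupp.tail_apply]
  obtain ⟨k, hk⟩ := Nat.even_or_odd' (m - mdeg α)
  have hlift := (Dehomogenizes.monomial α r).theta_pow_mul k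
  have hθ := totalDegree_theta_pow_mul_le k (monomial α.tail r)
  rw [mul_zero] at hlift
  obtain hk | hk := hk
  · obtain rfl : m = 2 * k + mdeg α := by omega
    exact ⟨_, 0, hθ.trans (by omega), by simpa using by omega, hlift⟩
  · obtain rfl : m = 2 * k + mdeg α + 1 := by omega
    exact ⟨theta n * 0, _, by simp, hθ.trans_lt (by omega), hlift.succ⟩

theorem exists_dehomogenizes (hp : p.totalDegree < m) :
    ∃ A B : RPoly n, A.totalDegree ≤ m ∧ B.totalDegree < m ∧ Dehomogenizes m p A B := by
  rw [p.as_sum]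
  refine Finset.sum_induction _ (fun p => ∃ A B : RPoly n, A.totalDegree ≤ m ∧
    B.totalDegree < m ∧ Dehomogenizes m p A B) ?_ ?_ ?_
  · rintro p q ⟨A, B, hA, hB, hp⟩ ⟨A', B', hA', hB', hq⟩
    exact ⟨A + A', B + B', (totalDegree_add _ _).trans (max_le hA hA'),
      (totalDegree_add _ _).trans_lt (max_lt hB hB'), hp.add hq⟩
  · exact ⟨0, 0, by simp, by simpa using by omega, .zero⟩
  · exact fun α hα => exists_dehomogenizes_monomial ((mdeg_le_totalDegree hα).trans_lt hp) _

theorem eventually_totalDegree_le (s : Finset ℕ) (c : ℕ → RPoly n) :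
    ∀ᶠ m in atTop, ∀ j ∈ s, (c j).totalDegree ≤ 2 * m :=
  (eventually_all_finset s).2 fun j _ =>
    (eventually_ge_atTop (c j).totalDegree).mono fun m hm => by omega

/-- The polynomials whose even part under dehomogenization in every large even degree has a
certificate of that degree. -/
def dehomCone (E I : Finset ℕ) (c : ℕ → RPoly n) : PointedCone ℝ (RPoly (n + 1)) where
  carrier := {p | ∀ᶠ m in atTop, ∃ A ∈ truncCert E I c (2 * m), ∃ B, Dehomogenizes (2 * m) p A B}
  zero_mem' := by
    filter_upwards [eventually_totalDegree_le (E ∪ I) c] with m hc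
    exact ⟨0, IsSOS.zero.mem_truncCert hc (by simp), 0, .zero⟩
  add_mem' hp hq := by
    filter_upwards [hp, hq] with m ⟨A, hA, B, hAB⟩ ⟨A', hA', B', hAB'⟩
    exact ⟨A + A', add_mem_truncCert hA hA', B + B', hAB.add hAB'⟩
  smul_mem' r p hp := by
    filter_upwards [hp] with m ⟨A, hA, B, hAB⟩
    exact ⟨(r : ℝ) • A, smul_mem_truncCert r.2 hA, (r : ℝ) • B, hAB.smul r⟩

theorem sq_mem_dehomCone (a : RPoly (n + 1)) : a ^ 2 ∈ dehomCone E I c := by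
  filter_upwards [eventually_totalDegree_le (E ∪ I) c, eventually_gt_atTop a.totalDegree]
    with m hc hm
  obtain ⟨A, B, hA, hB, hAB⟩ := exists_dehomogenizes hm
  exact ⟨_, (isSOS_sq_add_theta_mul_sq A B).mem_truncCert hc
    (totalDegree_sq_add_theta_mul_sq_le hA hB), _, hAB.sq⟩

theorem ineq_mul_sq_mem_dehomCone {j : ℕ} (hj : j ∈ I) (hcj : Even (c j).totalDegree)
    (a : RPoly (n + 1)) : homogenize (c j) * a ^ 2 ∈ dehomCone E I c := by
  obtain ⟨r, hr⟩ := hcj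
  filter_upwards [eventually_totalDegree_le (E ∪ I) c, eventually_gt_atTop (r + a.totalDegree)]
    with m hc hm
  obtain ⟨A, B, hA, hB, hAB⟩ := exists_dehomogenizes (p := a) (m := m - r) (by omega)
  have hdeg : 2 * m = (c j).totalDegree + 2 * (m - r) := by omega
  refine ⟨c j * (A ^ 2 + theta n * B ^ 2),
    ineq_mul_mem_truncCert hc (isSOS_sq_add_theta_mul_sq A B) hj ?_, _,
    hdeg ▸ hAB.sq.homogenize_mul (c j)⟩
  have := totalDegree_sq_add_theta_mul_sq_le hA hB
  omega

theorem eq_mul_mem_dehomCone {o : Option ℕ} (ho : o ∈ OS E) (a : RPoly (n + 1)) :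
    gEqH c o * a ∈ dehomCone E I c := by
  obtain _ | j := o
  · filter_upwards [eventually_totalDegree_le (E ∪ I) c] with m hc
    exact ⟨0, IsSOS.zero.mem_truncCert hc (by simp), 0, .sphereP_mul _ _⟩
  · have hj : j ∈ E := by simpa [OS] using ho
    filter_upwards [eventually_totalDegree_le (E ∪ I) c,
      eventually_gt_atTop ((c j).totalDegree + a.totalDegree)] with m hc hm
    obtain ⟨A, B, hA, hB, hAB⟩ :=
      exists_dehomogenizes (p := a) (m := 2 * m - (c j).totalDegree) (by omega)
    have hdeg : 2 * m = (c j).totalDegree + (2 * m - (c j).totalDegree) := by omega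
    refine ⟨c j * A, eq_mul_mem_truncCert hc hj (by omega), c j * B, ?_⟩
    rw [hdeg]
    exact hAB.homogenize_mul (c j)

theorem certCone_le_dehomCone (hce : ∀ j ∈ I, Even (c j).totalDegree) :
    certCone (OS E) (gEqH c) I (fun j => homogenize (c j)) ≤ dehomCone E I c :=
  certCone_le_iff.2 ⟨sq_mem_dehomCone, fun j hj => ineq_mul_sq_mem_dehomCone hj (hce j hj),
    fun _ => eq_mul_mem_dehomCone⟩

theorem eventually_theta_pow_mul_mem_truncCert (hfe : Even f.totalDegree)
    (hF : homogObjective f γ ∈ dehomCone E I c) :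
    ∀ᶠ k in atTop, theta n ^ k * (f - C γ) ∈ truncCert E I c (2 * k + f.totalDegree) := by
  obtain ⟨r, hr⟩ := hfe
  filter_upwards [(tendsto_add_atTop_nat r).eventually hF] with k ⟨A, hA, B, hAB⟩
  have hdeg : 2 * (k + r) = 2 * k + f.totalDegree := by omega
  rw [hdeg] at hA hAB
  rwa [((Dehomogenizes.homogObjective f γ).theta_pow_mul k).left_unique hAB]

theorem le_of_theta_pow_mul_mem_truncCert {k l : ℕ} {x : Fin n → ℝ} (hx : x ∈ Kset E I c)
    (h : theta n ^ k * (f - C γ) ∈ truncCert E I c l) : γ ≤ eval x f := by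
  have hnonneg := eval_nonneg_of_mem_truncCert h hx
  rw [map_mul, map_pow, map_sub, eval_C] at hnonneg
  exact sub_nonneg.1 (nonneg_of_mul_nonneg_right hnonneg (pow_pos (eval_theta_pos x) k))

theorem denRelaxVal_eq_of_mem_truncCert {k : ℕ} {fmin : ℝ}
    (hfmin : IsGLB {v : ℝ | ∃ x ∈ Kset E I c, v = eval x f} fmin)
    (h : theta n ^ k * (f - C fmin) ∈ truncCert E I c (2 * k + f.totalDegree)) :
    DenRelaxVal E I c f f.totalDegree k = fmin := by
  refine IsGreatest.csSup_eq ⟨h, fun γ hγ => hfmin.2 ?_⟩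
  rintro _ ⟨x, hx, rfl⟩
  exact le_of_theta_pow_mul_mem_truncCert hx hγ

end Dehomogenization

theorem statement_9_general {n : ℕ} {E I : Finset ℕ} {c : ℕ → RPoly n} {f : RPoly n} {fmin : ℝ}
    (hfe : Even f.totalDegree) (hce : ∀ j ∈ I, Even (c j).totalDegree)
    (hcl : ClosedAtInfinity E I c)
    (hfmin : IsGLB {v : ℝ | ∃ x ∈ Kset E I c, v = eval x f} fmin)
    (hkkt : ∀ u ∈ sphereSet E I c,
      IsMinOn (fun x => eval x (homogObjective f fmin)) (sphereSet E I c) u →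
        ∃ lamE lamI, StrictKKT (OS E) (gEqH c) I (fun j => homogenize (c j))
          (homogObjective f fmin) u lamE lamI) :
    ∃ k0 : ℕ, ∀ k : ℕ, k0 ≤ k → DenRelaxVal E I c f f.totalDegree k = fmin := by
  have hlower : ∀ x ∈ Kset E I c, fmin ≤ eval x f := fun x hx => hfmin.1 ⟨x, hx, rfl⟩
  have hcert := hcl.homogObjective_mem_certCone hfe hce hlower hkkt
  have hdehom := eventually_theta_pow_mul_mem_truncCert hfe (certCone_le_dehomCone hce hcert)
  exact Filter.eventually_atTop.1 (hdehom.mono fun k => denRelaxVal_eq_of_mem_truncCert hfmin)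

/-- Theorem 4.6(i): finite convergence of the Moment-SOS hierarchy
with denominators, in the case of even degrees. -/
theorem statement_9
    (n d : ℕ) (E I : Finset ℕ) (hEI : Disjoint E I) (c : ℕ → RPoly n)
    (f : RPoly n) (hfd : f.totalDegree = d) (hde : Even d)
    (hce : ∀ j ∈ I, Even (c j).totalDegree)
    -- K is closed at infinity
    (hcl : ClosedAtInfinity E I c)
    -- f ∈ ℝ + int(P_d(K))
    (hint : ∃ cst : ℝ, (f - C cst) ∈ PdInterior d (Kset E I c))
    -- f_min is the (finite) optimal value of the problem
    (fmin : ℝ) (hfmin : IsGLB {v : ℝ | ∃ x ∈ Kset E I c, v = eval x f} fmin)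
    -- LICQC, SCC, SOSC at every global minimizer of (H⁰)
    (hopt : ∀ u : Fin (n + 1) → ℝ,
      ((∀ j ∈ E, eval u (homogenize (c j)) = 0) ∧
        (∀ j ∈ I, 0 ≤ eval u (homogenize (c j))) ∧ (∑ i, (u i) ^ 2) = 1 ∧
        (∀ x : Fin (n + 1) → ℝ,
          ((∀ j ∈ E, eval x (homogenize (c j)) = 0) ∧
            (∀ j ∈ I, 0 ≤ eval x (homogenize (c j))) ∧ (∑ i, (x i) ^ 2) = 1) →
          eval u (homogenize f - C fmin * (X 0 : RPoly (n + 1)) ^ d)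
            ≤ eval x (homogenize f - C fmin * (X 0 : RPoly (n + 1)) ^ d))) →
      OptCondsAt (OS E) (gEqH c) I (fun j => homogenize (c j))
        (homogenize f - C fmin * (X 0 : RPoly (n + 1)) ^ d) u) :
    ∃ k0 : ℕ, ∀ k : ℕ, k0 ≤ k → DenRelaxVal E I c f d k = fmin := by
  subst hfd
  refine statement_9_general hde hce hcl hfmin fun u hu hmin => ?_
  obtain ⟨heq, hin, hsphere⟩ := mem_sphereSet.1 hu
  exact (hopt u ⟨heq, hin, hsphere, fun x hx => hmin (mem_sphereSet.2 hx)⟩).exists_strictKKT
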